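/- arXiv:1810.06170 — 2 statements merged into one kernel-verified Lean document; each statement's English description precedes it below -/
import Mathlib

section
/- Let d ≥ 2 and let 𝒮 be a weighted step set satisfying the standing assumptions with negative drift (B(1) < A(1)), and suppose every step i ∈ 𝒮 with positive weight has i_d ≠ 0 (i.e. Q(1) = 0). Set ρ = √(A(1)/B(1)), and for x ∈ {ρ, −ρ} set S(1,x) = A(1)/x + xB(1), b_k(1,x) = Σ_{i∈𝒮, i_k=1} w_i x^{i_d}, and C_x = [S(1,x)·x / (2 π^{d/2} A(1) (1 − 1/x)²)] · √( S(1,x)^d / (x · b_1(1,x)⋯b_{d−1}(1,x) · B(1)) ), where the radicand in the square root is positive for both x = ρ and x = −ρ. Then there is a constant c > 0 such that for all n ≥ 1, | s_n − n^{−d/2−1}( S(1,ρ)^n C_ρ + S(1,−ρ)^n C_{−ρ} ) | ≤ c · S(1,ρ)^n · n^{−d/2−2}. -/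
open Finset

/-- The weighted number of walks of length `n` with steps in `S` (weights `w`),
beginning at the origin and confined to the non-negative orthant. -/
noncomputable def weightedWalkCount (d : ℕ) (S : Finset (Fin d → ℤ))
    (w : (Fin d → ℤ) → ℝ) (n : ℕ) : ℝ :=
  ∑ u : Fin n → S,
    if (∀ k : Fin n, ∀ m : Fin d, 0 ≤ ∑ j ∈ Finset.Iic k, (u j : Fin d → ℤ) m)
    then ∏ k : Fin n, w (u k) else 0


noncomputable def bal {R : Type*} [Ring R] (a b : R) : ℕ → ℤ → R
  | 0, y => if 0 ≤ y then 1 else 0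
  | n+1, y => if 0 ≤ y then b * bal a b n (y+1) + a * bal a b n (y-1) else 0

lemma bal_neg {R : Type*} [Ring R] (a b : R) (n : ℕ) (y : ℤ) (hy : y < 0) : bal a b n y = 0 := by
  cases n <;> simp [bal, not_le.mpr hy]

lemma bal_formula {R : Type*} [Ring R] [Algebra ℝ R] (a b : R) (hab : Commute a b) (n : ℕ) (y : ℕ) :
    bal a b n y = ∑ p ∈ range (n+1), (if n ≤ y + 2*p then
      ((n.choose p : ℝ) - n.choose (p+y+1)) • (b^p * a^(n-p)) else 0) := by
  induction n generalizing y with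
  | zero => simp [bal]
  | succ n ih =>
    have h2 : bal a b n ((y:ℤ)-1) = ∑ p ∈ range (n+1), (if n + 1 ≤ y + 2*p then
      ((n.choose p : ℝ) - n.choose (p+y)) • (b^p * a^(n-p)) else 0) := by
      cases y with
      | zero => rw [bal_neg _ _ _ _ (by simp)]; simp
      | succ y =>
        have : (((y+1:ℕ):ℤ)-1) = (y:ℤ) := by push_cast; ring
        rw [this, ih]
        refine sum_congr rfl fun p _ => ?_
        have : (n ≤ y + 2*p) ↔ (n + 1 ≤ y + 1 + 2*p) := by omega
        simp only [this, add_assoc]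
    have h1 := ih (y+1)
    push_cast at h1
    rw [bal, if_pos (by positivity), h1, h2, Finset.mul_sum, Finset.mul_sum]
    have e1 : ∀ P, (if n + 1 ≤ y + 2*P then
      (((n+1).choose P : ℝ) - (n+1).choose (P+y+1)) • (b^P * a^(n+1-P)) else 0)
      = (if n + 1 ≤ y + 2*P then
      (((n+1).choose P - n.choose P : ℝ) - n.choose (P+y+1)) • (b^P * a^(n+1-P)) else 0)
      + (if n + 1 ≤ y + 2*P then
      ((n.choose P : ℝ) - n.choose (P+y)) • (b^P * a^(n+1-P)) else 0) := by
      intro P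
      split_ifs
      · rw [← add_smul]
        congr 1
        rw [Nat.choose_succ_succ n (P+y)]; push_cast; ring
      · simp
    rw [sum_congr rfl fun P _ => e1 P, sum_add_distrib]
    congr 1
    · rw [sum_range_succ' _ (n+1)]
      have z : (if n + 1 ≤ y + 2*0 then
        (((n+1).choose 0 - n.choose 0 : ℝ) - n.choose (0+y+1)) • (b^0 * a^(n+1-0)) else 0) = 0 := by
        split_ifs with h
        · rw [Nat.choose_eq_zero_of_lt (by omega : n < 0 + y + 1)]; simp
        · rfl
      rw [z, add_zero]
      refine sum_congr rfl fun p hp => ?_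
      have : (n ≤ y + 1 + 2*p) ↔ (n + 1 ≤ y + 2*(p+1)) := by omega
      simp only [this]
      split_ifs
      · rw [mul_smul_comm, ← mul_assoc, ← pow_succ']
        rw [show p + (y+1) + 1 = p + 1 + y + 1 by ring, show n + 1 - (p + 1) = n - p by omega]
        congr 1
        rw [Nat.choose_succ_succ n p]; push_cast; ring
      · simp
    · rw [sum_range_succ _ (n+1)]
      have z : (if n + 1 ≤ y + 2*(n+1) then
        ((n.choose (n+1) : ℝ) - n.choose (n+1+y)) • (b^(n+1) * a^(n+1-(n+1))) else 0) = 0 := by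
        rw [Nat.choose_eq_zero_of_lt (by omega : n < n+1), Nat.choose_eq_zero_of_lt (by omega : n < n+1+y)]; simp
      rw [z, add_zero]
      refine sum_congr rfl fun p hp => ?_
      split_ifs
      · rw [mul_smul_comm, ← mul_assoc, (hab.pow_right p).eq, mul_assoc, ← pow_succ']
        congr 3; have := mem_range.mp hp; omega
      · simp

lemma bal_succ_comm {R : Type*} [Ring R] [Algebra ℝ R] (a b c : R) (ha : Commute a c) (hb : Commute b c)
    (n : ℕ) (y : ℤ) : Commute (bal a b n y) c := by
  induction n generalizing y with
  | zero => rw [bal]; split_ifs; exact Commute.one_left _; exact Commute.zero_left _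
  | succ n ih =>
    rw [bal]; split_ifs
    · exact (hb.mul_left (ih _)).add_left (ha.mul_left (ih _))
    · exact Commute.zero_left _

noncomputable def hcount (d : ℕ) (S : Finset (Fin d → ℤ)) (w : (Fin d → ℤ) → ℝ) (n : ℕ) (x : Fin d → ℤ) : ℝ :=
  ∑ u : Fin n → S,
    if (∀ k : Fin n, ∀ m : Fin d, 0 ≤ x m + ∑ j ∈ Finset.Iic k, (u j : Fin d → ℤ) m)
    then ∏ k : Fin n, w (u k) else 0

lemma hcount_zero (d S w x) : hcount d S w 0 x = 1 := by simp [hcount]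

lemma sum_Iic_zero' {n : ℕ} (f : Fin (n+1) → ℤ) : ∑ j ∈ Iic (0 : Fin (n+1)), f j = f 0 := by
  have : Iic (0 : Fin (n+1)) = {0} := by ext; simp
  rw [this]; simp

lemma sum_Iic_succ' {n : ℕ} (f : Fin (n+1) → ℤ) (k : Fin n) :
   ∑ j ∈ Iic k.succ, f j = f 0 + ∑ j ∈ Iic k, f j.succ := by
  have : Iic k.succ = insert 0 ((Iic k).map (Fin.succEmb n)) := by
    ext j
    refine Fin.cases ?_ (fun i => ?_) j
    · simp
    · simp [Fin.succ_ne_zero]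
  rw [this, sum_insert (by simp [Fin.succ_ne_zero]), sum_map]
  rfl

lemma hcount_succ (d S w n x) : hcount d S w (n+1) x =
    ∑ i ∈ S, if (∀ m, 0 ≤ x m + i m) then w i * hcount d S w n (x + i) else 0 := by
  rw [hcount, ← (Fin.consEquiv (fun _ => S)).sum_comp, Fintype.sum_prod_type, ← Finset.sum_coe_sort S]
  refine sum_congr rfl fun i _ => ?_
  simp only [hcount, Fin.consEquiv_apply, Fin.prod_univ_succ, Fin.cons_zero, Fin.cons_succ,
    Fin.forall_fin_succ, sum_Iic_zero', sum_Iic_succ']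
  split_ifs with h
  · rw [mul_sum]
    refine sum_congr rfl fun u _ => ?_
    simp only [h, implies_true, true_and, Pi.add_apply, mul_ite, mul_zero, add_assoc]
  · simp [h]

lemma wwc_eq (d S w n) : weightedWalkCount d S w n = hcount d S w n 0 := by
  simp [weightedWalkCount, hcount]

noncomputable def StepOp (d : ℕ) (S' : Finset (Fin d → ℤ)) (v : (Fin d → ℤ) → ℝ) :
    Module.End ℝ ((Fin d → ℕ) → ℝ) where
  toFun f N := ∑ i ∈ S', v i * f (N + fun j => (i j).natAbs)
  map_add' f g := by ext N; simp [mul_add, sum_add_distrib]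
  map_smul' c f := by ext N; simp [mul_sum]; refine sum_congr rfl fun i _ => ?_; ring

lemma StepOp_apply (d S' v f N) : StepOp d S' v f N = ∑ i ∈ S', v i * f (N + fun j => (i j).natAbs) := rfl

lemma StepOp_comm (d S1 v1 S2 v2) : Commute (StepOp d S1 v1) (StepOp d S2 v2) := by
  refine LinearMap.ext fun f => ?_
  ext N
  simp only [Module.End.mul_apply, StepOp_apply, mul_sum]
  rw [sum_comm]
  refine sum_congr rfl fun i _ => sum_congr rfl fun k _ => ?_
  rw [add_assoc, add_assoc, add_comm (fun j => (i j).natAbs)]; ring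

lemma flip_one {d : ℕ} (S' : Finset (Fin d → ℤ)) (v : (Fin d → ℤ) → ℝ) (a : Fin d)
    (hs : ∀ i ∈ S', Function.update i a (-(i a)) ∈ S' ∧ v (Function.update i a (-(i a))) = v i)
    (f g : ℤ → ℝ) (hfg : ∀ i ∈ S', f (i a) + f (- i a) = g (i a) + g (- i a))
    (h : (Fin d → ℤ) → ℝ) (hh : ∀ i, h (Function.update i a (-(i a))) = h i) :
    ∑ i ∈ S', v i * h i * f (i a) = ∑ i ∈ S', v i * h i * g (i a) := by
  have key : ∀ φ : ℤ → ℝ, ∑ i ∈ S', v i * h i * φ (i a) = ∑ i ∈ S', v i * h i * φ (- i a) := by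
    intro φ
    refine sum_nbij' (fun i => Function.update i a (-(i a))) (fun i => Function.update i a (-(i a)))
      (fun i hi => (hs i hi).1) (fun i hi => (hs i hi).1) (by intro i hi; simp) (by intro i hi; simp) ?_
    intro i hi
    rw [hh, (hs i hi).2]; simp
  have h1 := key f
  have h2 := key g
  have h3 : ∑ i ∈ S', v i * h i * f (i a) + ∑ i ∈ S', v i * h i * f (-i a) =
    ∑ i ∈ S', v i * h i * g (i a) + ∑ i ∈ S', v i * h i * g (- i a) := by
    rw [← sum_add_distrib, ← sum_add_distrib]
    refine sum_congr rfl fun i hi => ?_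
    rw [← mul_add, hfg i hi, mul_add]
  linarith

lemma flip_all {d : ℕ} (S' : Finset (Fin d → ℤ)) (v : (Fin d → ℤ) → ℝ) (J : Finset (Fin d))
    (hs : ∀ a ∈ J, ∀ i ∈ S', Function.update i a (-(i a)) ∈ S' ∧ v (Function.update i a (-(i a))) = v i)
    (f g : Fin d → ℤ → ℝ) (hfg : ∀ a ∈ J, ∀ i ∈ S', f a (i a) + f a (- i a) = g a (i a) + g a (- i a))
    (h : (Fin d → ℤ) → ℝ) (hh : ∀ a ∈ J, ∀ i, h (Function.update i a (-(i a))) = h i) :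
    ∑ i ∈ S', v i * h i * ∏ j ∈ J, f j (i j) = ∑ i ∈ S', v i * h i * ∏ j ∈ J, g j (i j) := by
  induction J using Finset.induction_on generalizing h with
  | empty => simp
  | insert a J ha ih =>
    have h1 := ih (fun b hb => hs b (mem_insert_of_mem hb)) (fun b hb => hfg b (mem_insert_of_mem hb))
      (fun i => h i * f a (i a)) (by
        intro b hb i
        have : a ≠ b := by rintro rfl; exact ha hb
        rw [Function.update_of_ne this, hh b (mem_insert_of_mem hb)])
    have h2 := flip_one S' v a (hs a (mem_insert_self _ _)) (f a) (g a) (hfg a (mem_insert_self _ _))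
      (fun i => h i * ∏ j ∈ J, g j (i j)) (by
        intro i
        rw [hh a (mem_insert_self _ _)]
        congr 1
        refine prod_congr rfl fun j hj => ?_
        have : j ≠ a := by rintro rfl; exact ha hj
        rw [Function.update_of_ne this])
    simp only [prod_insert ha]
    calc _ = ∑ i ∈ S', v i * (h i * f a (i a)) * ∏ j ∈ J, f j (i j) := sum_congr rfl fun i _ => by ring
      _ = _ := h1
      _ = ∑ i ∈ S', v i * (h i * ∏ j ∈ J, g j (i j)) * f a (i a) := sum_congr rfl fun i _ => by ring
      _ = _ := h2
      _ = _ := sum_congr rfl fun i _ => by ring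

noncomputable def bet (x : ℤ) (N : ℕ) : ℝ := bal (1/2:ℝ) (1/2) N x

lemma bet_avg (x : ℤ) (hx : 0 ≤ x) (N : ℕ) (z : ℤ) (hz : z = -1 ∨ z = 0 ∨ z = 1) :
    bet (x+z) N + bet (x + -z) N = bet x (N + z.natAbs) + bet x (N + (-z).natAbs) := by
  rcases hz with rfl | rfl | rfl
  · simp [bet]; rw [bal, if_pos hx, ← sub_eq_add_neg]; ring
  · simp
  · simp [bet]; rw [bal, if_pos hx, ← sub_eq_add_neg]; ring

noncomputable def Fx (d : ℕ) (J : Finset (Fin d)) (x : Fin d → ℤ) (N : Fin d → ℕ) : ℝ := ∏ j ∈ J, bet (x j) (N j)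

lemma StepOp_Fx {d : ℕ} (S' : Finset (Fin d → ℤ)) (v : (Fin d → ℤ) → ℝ) (J : Finset (Fin d))
    (hsmall : ∀ i ∈ S', ∀ m, i m = -1 ∨ i m = 0 ∨ i m = 1)
    (hs : ∀ a ∈ J, ∀ i ∈ S', Function.update i a (-(i a)) ∈ S' ∧ v (Function.update i a (-(i a))) = v i)
    (x : Fin d → ℤ) (hx : ∀ j, 0 ≤ x j) :
    StepOp d S' v (Fx d J x) = ∑ i ∈ S', v i • Fx d J (x + i) := by
  ext N
  rw [StepOp_apply, Finset.sum_apply]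
  simp only [Fx, Pi.smul_apply, smul_eq_mul, Pi.add_apply]
  have := flip_all S' v J hs (fun j z => bet (x j + z) (N j)) (fun j z => bet (x j) (N j + z.natAbs))
    (fun a ha i hi => bet_avg (x a) (hx a) (N a) (i a) (hsmall i hi a)) (fun _ => 1) (by simp)
  simpa using this.symm

lemma hcount_eq {d : ℕ} (l : Fin d) (J : Finset (Fin d)) (hJ : ∀ j, j ∈ J ↔ j ≠ l)
    (S : Finset (Fin d → ℤ)) (w : (Fin d → ℤ) → ℝ)
    (hsmall : ∀ i ∈ S, ∀ m, i m = -1 ∨ i m = 0 ∨ i m = 1)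
    (hs : ∀ a ∈ J, ∀ i ∈ S, Function.update i a (-(i a)) ∈ S ∧ w (Function.update i a (-(i a))) = w i)
    (hQ : ∀ i ∈ S, i l = 0 → w i = 0) (n : ℕ) (x : Fin d → ℤ) (hx : ∀ j, 0 ≤ x j) :
    hcount d S w n x = bal (StepOp d (S.filter (fun i => i l = -1)) w) (StepOp d (S.filter (fun i => i l = 1)) w)
      n (x l) (Fx d J x) 0 := by
  have hs' : ∀ c : ℤ, ∀ a ∈ J, ∀ i ∈ S.filter (fun i => i l = c),
      Function.update i a (-(i a)) ∈ S.filter (fun i => i l = c) ∧ w (Function.update i a (-(i a))) = w i := by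
    intro c a ha i hi
    rw [mem_filter] at hi ⊢
    have : l ≠ a := ((hJ a).1 ha).symm
    rw [Function.update_of_ne this]
    exact ⟨⟨(hs a ha i hi.1).1, hi.2⟩, (hs a ha i hi.1).2⟩
  induction n generalizing x with
  | zero =>
    rw [hcount_zero, bal, if_pos (hx l)]
    simp [Fx, bet, bal, hx]
  | succ n ih =>
    rw [hcount_succ, bal, if_pos (hx l)]
    have c1 : ∀ (c : ℤ) (z : ℤ), (c = -1 ∨ c = 1) →  Commute (bal (StepOp d (S.filter (fun i => i l = -1)) w) (StepOp d (S.filter (fun i => i l = 1)) w)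
      n z) (StepOp d (S.filter (fun i => i l = c)) w) := fun c z _ =>
      bal_succ_comm _ _ _ (StepOp_comm ..) (StepOp_comm ..) _ _
    rw [← (c1 1 _ (by simp)).eq, ← (c1 (-1) _ (by simp)).eq]
    simp only [LinearMap.add_apply, Module.End.mul_apply]
    rw [StepOp_Fx _ _ J (fun i hi => hsmall i (mem_filter.1 hi).1) (hs' _) x hx, 
      StepOp_Fx _ _ J (fun i hi => hsmall i (mem_filter.1 hi).1) (hs' _) x hx]
    simp only [map_sum, map_smul, Pi.add_apply, Finset.sum_apply, Pi.smul_apply, smul_eq_mul]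
    rw [sum_filter, sum_filter, ← sum_add_distrib]
    refine sum_congr rfl fun i hi => ?_
    by_cases hp : ∀ m, 0 ≤ x m + i m
    · rw [if_pos hp, ih (x + i) hp]
      rcases hsmall i hi l with h | h | h
      · simp [h, sub_eq_add_neg]
      · rw [hQ i hi h]; simp
      · simp [h]
    · rw [if_neg hp]
      push Not at hp
      obtain ⟨m, hm⟩ := hp
      by_cases hml : m = l
      · subst hml
        have h1 : i m = -1 := by rcases hsmall i hi m with h | h | h <;> have := hx m <;> omega
        rw [bal_neg _ _ n (x m - 1) (by omega)]
        simp [h1]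
      · have : Fx d J (x + i) = 0 := by
          ext N
          exact prod_eq_zero ((hJ m).2 hml) (bal_neg _ _ _ _ hm)
        simp [this]

lemma hcount_formula {d : ℕ} (l : Fin d) (J : Finset (Fin d)) (hJ : ∀ j, j ∈ J ↔ j ≠ l)
    (S : Finset (Fin d → ℤ)) (w : (Fin d → ℤ) → ℝ)
    (hsmall : ∀ i ∈ S, ∀ m, i m = -1 ∨ i m = 0 ∨ i m = 1)
    (hs : ∀ a ∈ J, ∀ i ∈ S, Function.update i a (-(i a)) ∈ S ∧ w (Function.update i a (-(i a))) = w i)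
    (hQ : ∀ i ∈ S, i l = 0 → w i = 0) (n : ℕ) :
    weightedWalkCount d S w n = ∑ p ∈ range (n+1), (if n ≤ 2*p then
      ((n.choose p : ℝ) - n.choose (p+1)) * (((StepOp d (S.filter (fun i => i l = 1)) w)^p * 
        (StepOp d (S.filter (fun i => i l = -1)) w)^(n-p)) (Fx d J 0) 0) else 0) := by
  rw [wwc_eq, hcount_eq l J hJ S w hsmall hs hQ n 0 (by simp)]
  have := bal_formula (StepOp d (S.filter (fun i => i l = -1)) w) (StepOp d (S.filter (fun i => i l = 1)) w)
    (StepOp_comm ..) n 0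
  simp only [Nat.cast_zero, zero_add, add_zero] at this
  simp only [Pi.zero_apply, this]
  rw [LinearMap.sum_apply, Finset.sum_apply]
  refine sum_congr rfl fun p _ => ?_
  split_ifs <;> simp

/-- central -/
lemma bet_zero (N : ℕ) : bet 0 N = (N.choose ((N+1)/2) : ℝ) / 2^N := by
  have := bal_formula (1/2:ℝ) (1/2) (Commute.all _ _) N 0
  simp only [Nat.cast_zero, zero_add, add_zero] at this
  rw [bet, this]
  have key : ∀ M, ∑ p ∈ range M, (if N ≤ 2 * p then ((N.choose p:ℝ) - N.choose (p+1)) else 0)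
     = if N ≤ 2 * M then (N.choose ((N+1)/2) : ℝ) - N.choose M else 0 := by
    intro M
    induction M with
    | zero => 
      simp
      rintro rfl
      simp
    | succ M ih =>
      rw [sum_range_succ, ih]
      by_cases h : N ≤ 2 * M
      · rw [if_pos h, if_pos h, if_pos (by omega)]; ring
      · rw [if_neg h, if_neg h]
        split_ifs with h2
        · rw [show (N+1)/2 = M+1 by omega]; ring
        · simp
  have k := key (N+1)
  rw [if_pos (by omega), Nat.choose_succ_self] at k
  rw [div_eq_mul_inv (N.choose ((N+1)/2) : ℝ)]
  rw [show (N.choose ((N+1)/2) : ℝ) = N.choose ((N+1)/2) - ((0:ℕ):ℝ) by simp, ← k, sum_mul]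
  refine sum_congr rfl fun p hp => ?_
  have hp := mem_range.1 hp
  split_ifs
  · rw [← pow_add, show p + (N - p) = N by omega]; simp
  · simp

lemma bet_even_sq (k : ℕ) : (bet 0 (2*k))^2 * Real.Wallis.W k * (2*k+1) = 1 := by
  rw [bet_zero, show (2*k+1)/2 = k by omega, Real.Wallis.W_eq_factorial_ratio]
  have : ((2*k).choose k : ℝ) = (2*k).factorial / (k.factorial * k.factorial) := by
    rw [Nat.cast_choose ℝ (by omega), show 2*k-k = k by omega]
  rw [this]
  have h1 : ((2*k).factorial : ℝ) ≠ 0 := by positivity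
  have h2 : (k.factorial : ℝ) ≠ 0 := by positivity
  field_simp
  ring

lemma bet_odd (k : ℕ) : bet 0 (2*k+1) = bet 0 (2*(k+1)) := by
  rw [bet_zero, bet_zero, show (2*k+1+1)/2 = k+1 by omega, show (2*(k+1)+1)/2 = k+1 by omega]
  rw [show 2*(k+1) = (2*k+1)+1 by ring, Nat.choose_succ_succ (2*k+1) k, 
    ← Nat.choose_symm_half k]
  push_cast
  rw [pow_succ 2 (2*k+1)]
  have : (2:ℝ)^(2*k+1) ≠ 0 := by positivity
  field_simp
  ring

lemma bet_nonneg (N : ℕ) : 0 ≤ bet 0 N := by rw [bet_zero]; positivity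

lemma bet_le_one (N : ℕ) : bet 0 N ≤ 1 := by
  rw [bet_zero, div_le_one (by positivity)]
  exact_mod_cast Nat.choose_le_two_pow N _

lemma bet_even_bd (k : ℕ) : 1 ≤ (bet 0 (2*k))^2 * (Real.pi/2) * (2*k+1) ∧
    (bet 0 (2*k))^2 * (Real.pi/2) * (2*k+1)^2 ≤ (2*k+2) := by
  have h := bet_even_sq k
  have h1 := Real.Wallis.W_le k
  have h2 := Real.Wallis.le_W k
  have hk : (0:ℝ) ≤ k := by positivity
  constructor
  · calc (1:ℝ) = (bet 0 (2*k))^2 * Real.Wallis.W k * (2*k+1) := h.symm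
      _ ≤ _ := by gcongr
  · have : ((2:ℝ) * k + 1) / (2 * k + 2) * (Real.pi / 2) * (2*k+2) = (2*k+1) * (Real.pi/2) := by
      field_simp
    have h3 : (2*k+1) * (Real.pi/2) ≤ Real.Wallis.W k * (2*k+2) := by
      rw [← this]; gcongr
    calc (bet 0 (2*k))^2 * (Real.pi/2) * (2*k+1)^2 = (bet 0 (2*k))^2 * (2*k+1) * ((2*k+1) * (Real.pi/2)) := by ring
      _ ≤ (bet 0 (2*k))^2 * (2*k+1) * (Real.Wallis.W k * (2*k+2)) := by gcongr
      _ = ((bet 0 (2*k))^2 * Real.Wallis.W k * (2*k+1)) * (2*k+2) := by ring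
      _ = _ := by rw [h]; ring

lemma bet_sq_bd (N : ℕ) (hN : 1 ≤ N) : |(bet 0 N)^2 * (Real.pi/2) * (N:ℝ) - 1| ≤ 2 / (N:ℝ) := by
  have hN' : (1:ℝ) ≤ N := by exact_mod_cast hN
  have e2 : (2/(N:ℝ)) * N = 2 := by field_simp
  have e3 : 0 < 2/(N:ℝ) := by positivity
  rcases Nat.even_or_odd' N with ⟨k, rfl | rfl⟩
  · have ⟨h1, h2⟩ := bet_even_bd k
    set t := (bet 0 (2*k))^2 * (Real.pi/2) with ht
    have ht0 : 0 ≤ t := by positivity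
    push_cast at *
    rw [abs_le]
    have : t ≤ 1 := by nlinarith
    constructor <;> rw [← sub_nonneg] <;> [skip; skip]
    · have : 0 ≤ (t * (2*k) - 1 - -(2/(2*(k:ℝ)))) * (2*k) := by nlinarith
      exact nonneg_of_mul_nonneg_left this (by linarith)
    · have : 0 ≤ ((2/(2*(k:ℝ))) - (t * (2*k) - 1)) * (2*k) := by nlinarith
      exact nonneg_of_mul_nonneg_left this (by linarith)
  · have ⟨h1, h2⟩ := bet_even_bd (k+1)
    rw [bet_odd]
    set t := (bet 0 (2*(k+1)))^2 * (Real.pi/2) with ht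
    have ht0 : 0 ≤ t := by positivity
    push_cast at *
    rw [abs_le]
    have : t ≤ 1 := by nlinarith
    constructor <;> rw [← sub_nonneg] <;> [skip; skip]
    · have : 0 ≤ (t * (2*k+1) - 1 - -(2/(2*(k:ℝ)+1))) * (2*k+1) := by nlinarith
      exact nonneg_of_mul_nonneg_left this (by linarith)
    · have : 0 ≤ ((2/(2*(k:ℝ)+1)) - (t * (2*k+1) - 1)) * (2*k+1) := by nlinarith
      exact nonneg_of_mul_nonneg_left this (by linarith)

lemma bet_asymp (N : ℕ) (hN : 1 ≤ N) : |bet 0 N * Real.sqrt (Real.pi/2 * (N:ℝ)) - 1| ≤ 2 / (N:ℝ) := by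
  have h := bet_sq_bd N hN
  have h0 : 0 ≤ bet 0 N * Real.sqrt (Real.pi/2 * N) := mul_nonneg (bet_nonneg N) (Real.sqrt_nonneg _)
  have e : (bet 0 N)^2 * (Real.pi/2) * N - 1 = (bet 0 N * Real.sqrt (Real.pi/2 * N) - 1) * (bet 0 N * Real.sqrt (Real.pi/2 * N) + 1) := by
    have := Real.mul_self_sqrt (by positivity : 0 ≤ Real.pi/2 * N)
    linear_combination (-(bet 0 N)^2) * this
  rw [e, abs_mul, abs_of_pos (by linarith : 0 < bet 0 N * Real.sqrt (Real.pi/2 * N) + 1)] at h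
  nlinarith [abs_nonneg (bet 0 N * Real.sqrt (Real.pi/2 * N) - 1)]

/-- off central binomials -/
lemma choose_bd (n k : ℕ) (p : ℕ) (hk : 2 * p = n + k) (hpn : p ≤ n) :
    (n.choose p : ℝ) ≤ n.choose ((n+1)/2) ∧
    (n.choose ((n+1)/2) : ℝ) * (1 - k^2 / n) ≤ n.choose p := by
  rcases Nat.eq_zero_or_pos n with rfl | hn
  · simp at hpn; subst hpn; simp
  have hn' : (0:ℝ) < n := by exact_mod_cast hn
  induction p generalizing k with
  | zero => omega
  | succ p ih =>
    by_cases hc : n ≤ 2 * p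
    · obtain ⟨j, rfl⟩ : ∃ j, k = j + 2 := ⟨k - 2, by omega⟩
      have ⟨h1, h2⟩ := ih j (by omega) (by omega)
      have hr : (n.choose (p+1) : ℝ) * (p+1) = n.choose p * (n - p) := by
        have := Nat.choose_succ_right_eq n p
        have h := congrArg (Nat.cast (R := ℝ)) this
        rw [Nat.cast_mul, Nat.cast_mul, Nat.cast_sub (by omega)] at h
        exact_mod_cast h
      have hj : (2:ℝ) * p = n + j := by exact_mod_cast (by omega : 2 * p = n + j)
      have hj0 : (0:ℝ) ≤ j := by positivity
      have hr' : (n.choose (p+1) : ℝ) = n.choose p * (1 - (2 * j + 2)/(n+j+2)) := by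
        have : ((n:ℝ) + j + 2) = 2 * (p + 1) := by linarith
        rw [this]
        field_simp
        linear_combination hr - (n.choose p : ℝ) * hj
      have hcp : (0:ℝ) ≤ n.choose p := by positivity
      constructor
      · refine le_trans ?_ h1
        rw [hr']
        apply mul_le_of_le_one_right hcp
        have : 0 ≤ (2 * (j:ℝ) + 2)/(n+j+2) := by positivity
        linarith
      · have hfr : (2 * (j:ℝ) + 2)/(n+j+2) ≤ (2*j+2)/n := by
          apply div_le_div_of_nonneg_left <;> linarith
        have h0 : 0 ≤ (n.choose ((n+1)/2) : ℝ) := by positivity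
        by_cases hneg : 1 - ((j+2:ℕ):ℝ)^2/n ≤ 0
        · exact le_trans (mul_nonpos_of_nonneg_of_nonpos h0 hneg) (by positivity)
        · push Not at hneg
          push_cast at *
          have e0 : ((j:ℝ)+2)^2/n = j^2/n + (2*j+2)/n + (2*j+2)/n := by ring
          have hp1 : 0 ≤ (2*(j:ℝ)+2)/n := by positivity
          have hp2 : 0 ≤ (j:ℝ)^2/n := by positivity
          rw [hr']
          calc (n.choose ((n+1)/2) : ℝ) * (1 - (j+2)^2/n) ≤ (n.choose ((n+1)/2) : ℝ) * ((1 - j^2/n) * (1 - (2*j+2)/n)) := by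
                gcongr
                nlinarith
            _ = (n.choose ((n+1)/2) : ℝ) * (1 - j^2/n) * (1 - (2*j+2)/n) := by ring
            _ ≤ n.choose p * (1 - (2*j+2)/(n+j+2)) := by
                gcongr
                linarith
    · have : (n+1)/2 = p + 1 := by omega
      rw [this]
      refine ⟨le_refl _, ?_⟩
      apply mul_le_of_le_one_right (by positivity)
      have : 0 ≤ (k:ℝ)^2/n := by positivity
      linarith

lemma choose_asymp (n k : ℕ) (hn : 1 ≤ n) (p : ℕ) (hk : 2 * p = n + k) (hpn : p ≤ n) :
    |(n.choose p : ℝ) / 2^n * Real.sqrt (Real.pi/2 * n) - 1| ≤ 5 * ((k:ℝ)+1)^2 / n ∧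
    |(n.choose p : ℝ) / 2^n * Real.sqrt (Real.pi/2 * n)| ≤ 3 := by
  have hn' : (1:ℝ) ≤ n := by exact_mod_cast hn
  have h := bet_asymp n hn
  rw [bet_zero] at h
  have ⟨h1, h2⟩ := choose_bd n k p hk hpn
  set q := Real.sqrt (Real.pi/2 * n)
  have hq : 0 ≤ q := Real.sqrt_nonneg _
  set c := (n.choose ((n+1)/2) : ℝ)
  have hx : (n.choose p : ℝ) / 2^n * q ≤ c / 2^n * q := by gcongr
  have hy : c / 2^n * q * (1 - k^2/n) ≤ (n.choose p : ℝ) / 2^n * q := by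
    calc c / 2^n * q * (1 - k^2/n) = (c * (1 - k^2/n)) / 2^n * q := by ring
      _ ≤ _ := by gcongr
  rw [abs_le] at h
  have h2n : 2/(n:ℝ) ≤ 2 := by rw [div_le_iff₀] <;> linarith
  have hk0 : 0 ≤ (k:ℝ)^2/n := by positivity
  have e : 5 * ((k:ℝ)+1)^2/n = 5 * (k^2/n) + 5 * (2 * k/n) + 5/2*(2/n) := by ring
  have hk1 : 0 ≤ 2*(k:ℝ)/n := by positivity
  have hn2 : 0 < 2/(n:ℝ) := by positivity
  constructor
  · rw [abs_le, e]
    constructor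
    · nlinarith
    · linarith
  · rw [abs_of_nonneg (by positivity)]; linarith

section moments
variable {d : ℕ} {S' : Finset (Fin d → ℤ)} {v : (Fin d → ℤ) → ℝ}

lemma op_mono (hv : ∀ i ∈ S', 0 ≤ v i) {f g : (Fin d → ℕ) → ℝ} (h : f ≤ g) :
    StepOp d S' v f ≤ StepOp d S' v g := by
  intro N
  rw [StepOp_apply, StepOp_apply]
  exact sum_le_sum fun i hi => mul_le_mul_of_nonneg_left (h _) (hv i hi)

lemma op_pow_mono (hv : ∀ i ∈ S', 0 ≤ v i) (p : ℕ) {f g : (Fin d → ℕ) → ℝ} (h : f ≤ g) :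
    (StepOp d S' v ^ p) f ≤ (StepOp d S' v ^ p) g := by
  induction p with
  | zero => simpa
  | succ p ih =>
    rw [pow_succ', Module.End.mul_apply, Module.End.mul_apply]
    exact op_mono hv ih

lemma op_one_pow (h1 : ∑ i ∈ S', v i = 1) (p : ℕ) (c : ℝ) :
    (StepOp d S' v ^ p) (fun _ => c) = fun _ => c := by
  induction p with
  | zero => simp
  | succ p ih =>
    rw [pow_succ', Module.End.mul_apply, ih]
    ext N
    rw [StepOp_apply, ← sum_mul, h1, one_mul]

lemma op_lin_pow (h1 : ∑ i ∈ S', v i = 1) (j : Fin d) (π : ℝ) 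
    (hπ : π = ∑ i ∈ S', v i * ((i j).natAbs : ℝ)) (p : ℕ) (c : ℝ) :
    (StepOp d S' v ^ p) (fun N => (N j : ℝ) + c) = fun N => (N j : ℝ) + (c + p * π) := by
  induction p generalizing c with
  | zero => simp
  | succ p ih =>
    rw [pow_succ', Module.End.mul_apply, ih]
    ext N
    rw [StepOp_apply]
    simp only [Pi.add_apply, Nat.cast_add]
    calc _ = ∑ i ∈ S', (v i * ((i j).natAbs : ℝ) + v i * (N j + (c + p * π))) :=
          sum_congr rfl fun i _ => by ring
      _ = _ := by rw [sum_add_distrib, ← hπ, ← sum_mul, h1]; push_cast; ring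

lemma op_sq_pow (h1 : ∑ i ∈ S', v i = 1) (j : Fin d) (hs : ∀ i ∈ S', (i j).natAbs = 0 ∨ (i j).natAbs = 1) (π : ℝ) 
    (hπ : π = ∑ i ∈ S', v i * ((i j).natAbs : ℝ)) (p : ℕ) (c e : ℝ) :
    (StepOp d S' v ^ p) (fun N => ((N j : ℝ) + c)^2 + e) =
      fun N => ((N j : ℝ) + (c + p * π))^2 + (e + p * (π * (1-π))) := by
  induction p generalizing c with
  | zero => simp
  | succ p ih =>
    rw [pow_succ', Module.End.mul_apply, ih]
    ext N
    rw [StepOp_apply]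
    simp only [Pi.add_apply, Nat.cast_add]
    calc _ = ∑ i ∈ S', (v i * ((i j).natAbs : ℝ) * (1 + 2 * (N j + (c + p * π))) + v i * ((N j + (c + p * π))^2 + (e + p * (π * (1-π))))) :=
          sum_congr rfl fun i hi => by
            rcases hs i hi with h | h <;> rw [h] <;> push_cast <;> ring
      _ = _ := by rw [sum_add_distrib, ← sum_mul, ← hπ, ← sum_mul, h1]; push_cast; ring

lemma op_exp_pow (h1 : ∑ i ∈ S', v i = 1) (j : Fin d) (hs : ∀ i ∈ S', (i j).natAbs = 0 ∨ (i j).natAbs = 1) (π : ℝ) 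
    (hπ : π = ∑ i ∈ S', v i * ((i j).natAbs : ℝ)) (p : ℕ) (r c : ℝ) :
    (StepOp d S' v ^ p) (fun N => c * r ^ (N j)) =
      fun N => (c * (1 - π * (1 - r))^p) * r ^ (N j) := by
  induction p generalizing c with
  | zero => simp
  | succ p ih =>
    rw [pow_succ', Module.End.mul_apply, ih]
    ext N
    rw [StepOp_apply]
    simp only [Pi.add_apply]
    calc _ = ∑ i ∈ S', (v i - v i * ((i j).natAbs : ℝ) * (1 - r)) * (c * (1 - π * (1 - r))^p * r ^ (N j)) :=
          sum_congr rfl fun i hi => by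
            rcases hs i hi with h | h <;> rw [h] <;> push_cast <;> ring
      _ = _ := by rw [← sum_mul, sum_sub_distrib, h1, ← sum_mul, ← hπ]; ring

end moments

/-- product expansion -/
lemma prod_expand {ι : Type*} [DecidableEq ι] (J : Finset ι) (M : ℝ) (hM : 1 ≤ M) : ∃ C : ℝ, 0 ≤ C ∧ ∀ a l ε : ι → ℝ,
    (∀ j ∈ J, |a j| ≤ M ∧ |a j - 1 - l j| ≤ ε j ∧ (l j)^2 ≤ ε j ∧ (a j - 1)^2 ≤ ε j) →
    |∏ j ∈ J, a j - 1 - ∑ j ∈ J, l j| ≤ C * ∑ j ∈ J, ε j := by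
  induction J using Finset.induction_on with
  | empty => exact ⟨0, le_refl _, by simp⟩
  | insert i J hi ih =>
    obtain ⟨C, hC, h⟩ := ih
    refine ⟨M * C + 1 + J.card, by positivity, fun a l ε hyp => ?_⟩
    have hJ := h a l ε (fun j hj => hyp j (mem_insert_of_mem hj))
    obtain ⟨h1, h2, h3, h4⟩ := hyp i (mem_insert_self _ _)
    rw [prod_insert hi, sum_insert hi, sum_insert hi]
    have hε : ∀ j ∈ J, 0 ≤ ε j := fun j hj => le_trans (sq_nonneg _) (hyp j (mem_insert_of_mem hj)).2.2.1
    have hεi : 0 ≤ ε i := le_trans (sq_nonneg _) h3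
    have hE : 0 ≤ ∑ j ∈ J, ε j := sum_nonneg hε
    have e : a i * ∏ j ∈ J, a j - 1 - (l i + ∑ j ∈ J, l j) =
      a i * (∏ j ∈ J, a j - 1 - ∑ j ∈ J, l j) + (a i - 1 - l i) + ∑ j ∈ J, (a i - 1) * l j := by
      rw [← mul_sum]; ring
    have hsum : |∑ j ∈ J, (a i - 1) * l j| ≤ J.card * ε i + ∑ j ∈ J, ε j := by
      refine (abs_sum_le_sum_abs _ _).trans ?_
      rw [← nsmul_eq_mul, ← sum_const, ← sum_add_distrib]
      refine sum_le_sum fun j hj => ?_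
      have := (hyp j (mem_insert_of_mem hj)).2.2.1
      rw [abs_le]; constructor <;> nlinarith [sq_nonneg (a i - 1 - l j), sq_nonneg (a i - 1 + l j)]
    have hmul : |a i * (∏ j ∈ J, a j - 1 - ∑ j ∈ J, l j)| ≤ M * (C * ∑ j ∈ J, ε j) := by
      rw [abs_mul]; gcongr
    rw [e]
    refine (abs_add_le _ _).trans ?_
    refine (add_le_add_left (abs_add_le _ _) _).trans ?_
    have : 0 ≤ M * C * ε i := by positivity
    have : 0 ≤ J.card * ∑ j ∈ J, ε j := by positivity
    nlinarith

set_option maxHeartbeats 1000000 in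
lemma one_good (ν : ℝ) (h0 : 0 < ν) (h1 : ν ≤ 1) (n N : ℕ) (hn : 1 ≤ n) (hN : ν * n / 2 ≤ N) :
    |bet 0 N * Real.sqrt (Real.pi/2 * (ν * n))| ≤ 6 ∧
    |bet 0 N * Real.sqrt (Real.pi/2 * (ν * n)) - 1 - (- (N / (ν * n) - 1)/2)| ≤ 64 / (ν * n) + 8 * (N/(ν * n) - 1)^2 ∧
    (- (N / (ν * n) - 1)/2)^2 ≤ 64 / (ν * n) + 8 * (N/(ν * n) - 1)^2 ∧ 
    (bet 0 N * Real.sqrt (Real.pi/2 * (ν * n)) - 1)^2 ≤ 64 / (ν * n) + 8 * (N/(ν * n) - 1)^2 := by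
  have hn' : (1:ℝ) ≤ n := by exact_mod_cast hn
  have hT : 0 < ν * n := by positivity
  set T := ν * n with hTdef
  have hNpos : (0:ℝ) < N := by linarith
  have hN1 : 1 ≤ N := by exact_mod_cast hNpos
  have hN1' : (1:ℝ) ≤ N := by exact_mod_cast hN1
  set x := (N:ℝ)/T with hx
  have hx2 : 1/2 ≤ x := by rw [hx, le_div_iff₀ hT]; linarith
  have hxT : (N:ℝ) = x * T := by rw [hx]; field_simp
  obtain ⟨σ, hσ, hσx⟩ : ∃ σ : ℝ, 0 < σ ∧ σ^2 = x := ⟨Real.sqrt x, Real.sqrt_pos.2 (by linarith), Real.sq_sqrt (by linarith)⟩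
  have hσ2 : 1/2 ≤ σ := by nlinarith
  have hy := bet_asymp N hN1
  have hyN : 2/(N:ℝ) ≤ 4/T := by
    rw [div_le_div_iff₀ hNpos hT]; linarith
  have hyN2 : 2/(N:ℝ) ≤ 2 := by rw [div_le_iff₀] <;> linarith
  have hsq : Real.sqrt (Real.pi/2 * N) = Real.sqrt (Real.pi/2 * T) * σ := by
    rw [hxT, ← hσx, show Real.pi/2 * (σ^2 * T) = (Real.pi/2 * T) * σ^2 by ring, Real.sqrt_mul (by positivity),
      Real.sqrt_sq hσ.le]
  set y := bet 0 N * Real.sqrt (Real.pi/2 * N) with hydef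
  set a := bet 0 N * Real.sqrt (Real.pi/2 * T) with hadef
  have hya : y = a * σ := by rw [hydef, hsq, hadef]; ring
  have ha0 : 0 ≤ a := mul_nonneg (bet_nonneg _) (Real.sqrt_nonneg _)
  obtain ⟨s, hs⟩ : ∃ s, s = 1/σ := ⟨_, rfl⟩
  have hs0 : 0 < s := by rw [hs]; positivity
  have hs2 : s ≤ 2 := by rw [hs, div_le_iff₀ hσ]; linarith
  have hsσ : s * σ = 1 := by rw [hs]; field_simp
  have hay : a = y * s := by rw [hya, mul_assoc, mul_comm σ, hsσ, mul_one]
  have hy4 : |y - 1| ≤ 4/T := hy.trans hyN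
  have hy2 : |y - 1| ≤ 2 := hy.trans hyN2
  have hs1 : |s - 1| ≤ 2 * |x - 1| := by
    have : s - 1 = - (x - 1) * (s / (1 + σ)) := by
      rw [hs, ← hσx]; field_simp; ring
    rw [this, abs_mul, abs_neg, abs_of_pos (by positivity : 0 < s/(1+σ))]
    have : s/(1+σ) ≤ 2 := by rw [div_le_iff₀ (by positivity)]; linarith
    nlinarith [abs_nonneg (x-1)]
  have hs3 : |s - 1 - (-(x-1)/2)| ≤ 8 * (x-1)^2 := by
    have : s - 1 - (-(x-1)/2) = (σ-1)^2 * ((σ+2)/(2*σ)) := by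
      rw [hs, ← hσx]; field_simp; ring
    rw [this, abs_of_nonneg (by positivity), ← hσx]
    have : (σ+2)/(2*σ) ≤ 3 := by rw [div_le_iff₀ (by positivity)]; linarith
    have e : (σ^2-1)^2 = (σ-1)^2 * (σ+1)^2 := by ring
    rw [e]
    have : (σ-1)^2 * ((σ+2)/(2*σ)) ≤ (σ-1)^2 * (8 * (σ+1)^2) := by
      gcongr; nlinarith
    linarith
  have h4T : 64/T = 16 * (4/T) := by ring
  have hTp : 0 < 4/T := by positivity
  rw [h4T]
  refine ⟨?_, ?_, ?_, ?_⟩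
  · rw [abs_of_nonneg ha0, hay]
    have := abs_le.1 hy2
    have : y ≤ 3 := by linarith
    have : 0 ≤ y := by rw [hya]; positivity
    nlinarith
  · have : a - 1 - (-(x-1)/2) = (y - 1) * s + (s - 1 - (-(x-1)/2)) := by rw [hay]; ring
    rw [this]
    refine (abs_add_le _ _).trans ?_
    rw [abs_mul, abs_of_pos hs0]
    have : |y-1| * s ≤ 4/T * 2 := mul_le_mul hy4 hs2 hs0.le hTp.le
    linarith
  · have e : (-(x-1)/2)^2 = (x-1)^2/4 := by ring
    have := sq_nonneg (x-1)
    rw [e]; linarith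
  · have e : a - 1 = (y - 1) * s + (s - 1) := by rw [hay]; ring
    rw [e]
    have h5 : (s-1)^2 ≤ 4 * (x-1)^2 := by
      rw [← sq_abs (s-1), ← sq_abs (x-1)]; nlinarith [abs_nonneg (s-1), abs_nonneg (x-1)]
    have h6 : (y-1)^2 ≤ 2 * (4/T) := by
      rw [← sq_abs (y-1)]; nlinarith [abs_nonneg (y-1)]
    have h7 : ((y-1)*s)^2 ≤ 8 * (4/T) := by
      rw [mul_pow]
      have : s^2 ≤ 4 := by nlinarith
      have : (y-1)^2 * s^2 ≤ (2 * (4/T)) * 4 := mul_le_mul h6 this (sq_nonneg _) (by positivity)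
      linarith
    have h8 : ((y-1)*s + (s-1))^2 ≤ 2 * ((y-1)*s)^2 + 2 * (s-1)^2 := by
      have e : 2 * ((y-1)*s)^2 + 2 * (s-1)^2 - ((y-1)*s + (s-1))^2 = ((y-1)*s - (s-1))^2 := by ring
      have := sq_nonneg ((y-1)*s - (s-1))
      linarith
    linarith

/-- pointwise bound -/
lemma ptw {d : ℕ} (J : Finset (Fin d)) (ν : Fin d → ℝ) (hν : ∀ j ∈ J, 0 < ν j ∧ ν j ≤ 1) :
    ∃ C : ℝ, 0 ≤ C ∧ ∀ n : ℕ, 1 ≤ n → ∀ N : Fin d → ℕ,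
    |∏ j ∈ J, (bet 0 (N j) * Real.sqrt (Real.pi/2 * (ν j * n))) - 1 - ∑ j ∈ J, (- (N j / (ν j * n) - 1)/2)| ≤
      C * ∑ j ∈ J, (1 / (ν j * n) + (N j/(ν j * n) - 1)^2 + 
        (n:ℝ)^J.card * (Real.exp (ν j * n / 8) * Real.exp (-1/4) ^ (N j))) := by
  obtain ⟨C, hC, h⟩ := prod_expand J 6 (by norm_num)
  refine ⟨64 * C + 2^J.card + 1 + J.card, by positivity, fun n hn N => ?_⟩
  have hn' : (1:ℝ) ≤ n := by exact_mod_cast hn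
  have hpos : ∀ j ∈ J, 0 < ν j * n := fun j hj => mul_pos (hν j hj).1 (by linarith)
  have hX : ∀ j ∈ J, 0 ≤ (n:ℝ)^J.card * (Real.exp (ν j * n / 8) * Real.exp (-1/4) ^ (N j)) := fun j _ => by positivity
  have hP : ∀ j ∈ J, 0 ≤ 1 / (ν j * n) := fun j hj => by have := hpos j hj; positivity
  have hY : ∀ j ∈ J, 0 ≤ 1 / (ν j * n) + (N j/(ν j * n) - 1)^2 + 
        (n:ℝ)^J.card * (Real.exp (ν j * n / 8) * Real.exp (-1/4) ^ (N j)) := fun j hj => by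
    have := hX j hj; have := hP j hj; positivity
  have hYs := sum_nonneg hY
  by_cases hg : ∀ j ∈ J, ν j * n / 2 ≤ N j
  · have := h (fun j => bet 0 (N j) * Real.sqrt (Real.pi/2 * (ν j * n))) (fun j => - (N j / (ν j * n) - 1)/2)
      (fun j => 64 / (ν j * n) + 8 * (N j/(ν j * n) - 1)^2)
      (fun j hj => one_good (ν j) (hν j hj).1 (hν j hj).2 n (N j) hn (hg j hj))
    refine this.trans ?_
    calc C * ∑ j ∈ J, (64 / (ν j * n) + 8 * (N j/(ν j * n) - 1)^2) 
        ≤ C * (64 * ∑ j ∈ J, (1 / (ν j * n) + (N j/(ν j * n) - 1)^2 + 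
        (n:ℝ)^J.card * (Real.exp (ν j * n / 8) * Real.exp (-1/4) ^ (N j)))) := by
          gcongr
          rw [mul_sum]
          refine sum_le_sum fun j hj => ?_
          have := hX j hj
          have e : 64/(ν j * n) = 64 * (1/(ν j * n)) := by ring
          rw [e]
          have := sq_nonneg (N j/(ν j * n) - 1)
          linarith
      _ ≤ _ := by
          rw [← mul_assoc]
          gcongr
          have : (0:ℝ) ≤ 2^J.card := by positivity
          have : (0:ℝ) ≤ J.card := by positivity
          linarith
  · push Not at hg
    obtain ⟨i, hi, hiN⟩ := hg
    have hbad : 1 ≤ Real.exp (ν i * n / 8) * Real.exp (-1/4) ^ (N i) := by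
      rw [← Real.exp_nat_mul, ← Real.exp_add]
      apply Real.one_le_exp
      linarith
    set Y := ∑ j ∈ J, (1 / (ν j * n) + (N j/(ν j * n) - 1)^2 + 
        (n:ℝ)^J.card * (Real.exp (ν j * n / 8) * Real.exp (-1/4) ^ (N j))) with hYdef
    have hYn : (n:ℝ)^J.card ≤ Y := by
      refine le_trans ?_ (single_le_sum hY hi)
      have h1 : (n:ℝ)^J.card ≤ (n:ℝ)^J.card * (Real.exp (ν i * n / 8) * Real.exp (-1/4) ^ (N i)) :=
        le_mul_of_one_le_right (by positivity) hbad
      have := hP i hi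
      have := sq_nonneg (N i/(ν i * n) - 1)
      linarith
    have hY1 : 1 ≤ Y := le_trans (one_le_pow₀ hn') hYn
    have hprod : |∏ j ∈ J, (bet 0 (N j) * Real.sqrt (Real.pi/2 * (ν j * n)))| ≤ 2^J.card * Y := by
      rw [abs_prod]
      calc _ ≤ ∏ j ∈ J, (2 * (n:ℝ)) := by
            refine prod_le_prod (fun j _ => abs_nonneg _) fun j hj => ?_
            rw [abs_of_nonneg (mul_nonneg (bet_nonneg _) (Real.sqrt_nonneg _))]
            refine le_trans (mul_le_of_le_one_left (Real.sqrt_nonneg _) (bet_le_one _)) ?_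
            rw [Real.sqrt_le_left (by positivity)]
            have h2 : ν j * n ≤ n := mul_le_of_le_one_left (by positivity) (hν j hj).2
            have : Real.pi / 2 ≤ 2 := by linarith [Real.pi_le_four]
            have : Real.pi/2 * (ν j * n) ≤ 2 * n := mul_le_mul this h2 (hpos j hj).le (by norm_num)
            nlinarith
        _ = 2^J.card * (n:ℝ)^J.card := by rw [prod_const, mul_pow]
        _ ≤ _ := by gcongr
    have hlin : |∑ j ∈ J, (- (N j / (ν j * n) - 1)/2)| ≤ J.card * Y := by
      refine (abs_sum_le_sum_abs _ _).trans ?_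
      rw [← nsmul_eq_mul, ← sum_const]
      refine sum_le_sum fun j hj => ?_
      have h3 := single_le_sum hY hj
      rw [← hYdef] at h3
      have := hX j hj
      have := hP j hj
      have h4 : (N j/(ν j * n) - 1)^2 ≤ Y := by linarith
      rw [abs_le]
      constructor <;> nlinarith [sq_nonneg (N j/(ν j * n) - 1 - 1), sq_nonneg (N j/(ν j * n) - 1 + 1)]
    refine (abs_sub _ _).trans ?_
    refine (add_le_add_left (abs_sub _ _) _).trans ?_
    rw [abs_one]
    have : 0 ≤ 64 * C * Y := by positivity
    nlinarith

lemma E_abs {d : ℕ} (J : Finset (Fin d)) (ν : Fin d → ℝ) (hν : ∀ j ∈ J, 0 < ν j ∧ ν j ≤ 1) :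
    ∃ C : ℝ, 0 ≤ C ∧ ∀ n k : ℕ, 1 ≤ n → k ≤ n → ∀ E : ((Fin d → ℕ) → ℝ) →ₗ[ℝ] ℝ,
    (∀ f g, f ≤ g → E f ≤ E g) → E (fun _ => 1) = 1 →
    (∀ j ∈ J, |E (fun N => N j - ν j * n)| ≤ k) →
    (∀ j ∈ J, E (fun N => (N j - ν j * n)^2) ≤ k^2 + n) →
    (∀ j ∈ J, 4 * k ≤ n → E (fun N => Real.exp (-1/4) ^ (N j)) ≤ Real.exp (-(3/20) * (ν j * n))) →
    |E (fun N => ∏ j ∈ J, bet 0 (N j)) * ∏ j ∈ J, Real.sqrt (Real.pi/2 * (ν j * n)) - 1| ≤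
      C * ((k:ℝ)+1)^(J.card + 2) / n := by
  obtain ⟨C, hC, h⟩ := ptw J ν hν
  set m := J.card with hm
  -- constants
  set C2 : ℝ := ∑ j ∈ J, (1 / ν j + 2 / (ν j)^2 + (m+1).factorial * (40 / ν j)^(m+1)) with hC2
  set C3 : ℝ := ∑ j ∈ J, (1 / ν j) with hC3
  have hC2' : 0 ≤ C2 := sum_nonneg fun j hj => by have := (hν j hj).1; positivity
  have hC3' : 0 ≤ C3 := sum_nonneg fun j hj => by have := (hν j hj).1; positivity
  refine ⟨C * C2 + C3 + 2 * 8^(m+1), by positivity, fun n k hn hkn E hmono hone hlin hsq hexp => ?_⟩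
  have hn' : (1:ℝ) ≤ n := by exact_mod_cast hn
  have hpos : ∀ j ∈ J, 0 < ν j * n := fun j hj => mul_pos (hν j hj).1 (by linarith)
  have hk0 : (0:ℝ) ≤ k := by positivity
  have hk1 : (1:ℝ) ≤ (k+1)^(m+2) := one_le_pow₀ (by linarith)
  by_cases hk : 4 * k ≤ n
  · -- main case
    have habs : ∀ f g : (Fin d → ℕ) → ℝ, (∀ N, |f N| ≤ g N) → |E f| ≤ E g := by
      intro f g hfg
      rw [abs_le]
      constructor
      · rw [← map_neg]; apply hmono; intro N; have := (abs_le.1 (hfg N)).1; simp only [Pi.neg_apply]; linarith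
      · apply hmono; intro N; exact (abs_le.1 (hfg N)).2
    have hcard : (n:ℝ) ≤ n := le_refl _
    set fl : Fin d → (Fin d → ℕ) → ℝ := fun j N => N j - ν j * n with hfl
    set fs : Fin d → (Fin d → ℕ) → ℝ := fun j N => (N j - ν j * n)^2 with hfs
    set fe : Fin d → (Fin d → ℕ) → ℝ := fun j N => Real.exp (-1/4) ^ (N j) with hfe
    set o : (Fin d → ℕ) → ℝ := fun _ => 1 with ho
    set sc := ∏ j ∈ J, Real.sqrt (Real.pi/2 * (ν j * n)) with hsc
    have h1 := habs (sc • (fun N => ∏ j ∈ J, bet 0 (N j)) - o - ∑ j ∈ J, (-1/(2 * (ν j * n))) • fl j)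
      (C • ∑ j ∈ J, ((1/(ν j * n)) • o + (1/(ν j * n)^2) • fs j + ((n:ℝ)^m * Real.exp (ν j * n / 8)) • fe j)) (by
        intro N
        have := h n hn N
        simp only [Pi.sub_apply, Pi.smul_apply, smul_eq_mul, Finset.sum_apply, Pi.add_apply, ho, hfl, hfs, hfe]
        convert this using 2
        · congr 1
          · rw [prod_mul_distrib]; ring
          · refine sum_congr rfl fun j hj => ?_
            have := (hpos j hj).ne'
            have e : ((N j:ℝ)/(ν j * n) - 1) = (N j - ν j * n)/(ν j * n) := by rw [sub_div, div_self this]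
            rw [e]
            ring
        · refine sum_congr rfl fun j hj => ?_
          have := (hpos j hj).ne'
          have e : ((N j:ℝ)/(ν j * n) - 1) = (N j - ν j * n)/(ν j * n) := by rw [sub_div, div_self this]
          rw [e, div_pow]
          ring)
    simp only [map_sub, map_smul, map_sum, map_add, smul_eq_mul, hone] at h1
    -- bound RHS
    have hR : C * ∑ j ∈ J, ((1/(ν j * n)) * 1 + (1/(ν j * n)^2) * E (fs j) + ((n:ℝ)^m * Real.exp (ν j * n / 8)) * E (fe j))
        ≤ C * C2 * ((k:ℝ)+1)^(m+2) / n := by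
      rw [mul_assoc, mul_div_assoc]
      refine mul_le_mul_of_nonneg_left ?_ hC
      rw [hC2, sum_mul, sum_div]
      refine sum_le_sum fun j hj => ?_
      have hj0 := (hν j hj).1
      have hT := hpos j hj
      have b1 : (1/(ν j * n)) * 1 ≤ (1 / ν j) * ((k:ℝ)+1)^(m+2)/n := by
        rw [mul_one, mul_div_assoc, ← one_div_mul_one_div]
        gcongr
      have b2 : (1/(ν j * n)^2) * E (fs j) ≤ (2 / (ν j)^2) * ((k:ℝ)+1)^(m+2)/n := by
        calc (1/(ν j * n)^2) * E (fs j) ≤ (1/(ν j * n)^2) * (k^2+n) := by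
              gcongr; exact hsq j hj
          _ ≤ (1/(ν j * n)^2) * (2 * ((k+1)^2 * n)) := by
              gcongr
              nlinarith [mul_nonneg hk0 hk0]
          _ = (2 / (ν j)^2) * ((k:ℝ)+1)^2/n := by field_simp
          _ ≤ _ := by
              gcongr
              · linarith
              · omega
      have b3 : ((n:ℝ)^m * Real.exp (ν j * n / 8)) * E (fe j) ≤ ((m+1).factorial * (40 / ν j)^(m+1)) * ((k:ℝ)+1)^(m+2)/n := by
        have hpe := Real.pow_div_factorial_le_exp (ν j * n / 40) (by positivity) (m+1)
        rw [div_le_iff₀ (by positivity)] at hpe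
        calc ((n:ℝ)^m * Real.exp (ν j * n / 8)) * E (fe j) ≤ ((n:ℝ)^m * Real.exp (ν j * n / 8)) * Real.exp (-(3/20) * (ν j * n)) := by
              gcongr; exact hexp j hj hk
          _ = (n:ℝ)^m / Real.exp (ν j * n / 40) := by
              rw [mul_assoc, ← Real.exp_add, div_eq_mul_inv ((n:ℝ)^m), ← Real.exp_neg]
              congr 2; ring
          _ ≤ ((m+1).factorial * (40 / ν j)^(m+1)) / n := by
              rw [div_le_div_iff₀ (Real.exp_pos _) (by linarith)]
              have e : (n:ℝ)^m * n = (40/ν j)^(m+1) * (ν j * n/40)^(m+1) := by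
                rw [← mul_pow, ← pow_succ]; congr 1; field_simp
              rw [e]
              calc (40/ν j)^(m+1) * (ν j * n/40)^(m+1) ≤ (40/ν j)^(m+1) * (Real.exp (ν j * n / 40) * (m+1).factorial) := by gcongr
                _ = _ := by ring
          _ ≤ _ := by
              exact div_le_div_of_nonneg_right (le_mul_of_one_le_right (by positivity) hk1) (by positivity)
      calc _ ≤ _ := add_le_add (add_le_add b1 b2) b3
        _ = _ := by ring
    have hL : |∑ j ∈ J, (-1/(2 * (ν j * n))) * E (fl j)| ≤ C3 * ((k:ℝ)+1)^(m+2) / n := by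
      refine (abs_sum_le_sum_abs _ _).trans ?_
      rw [hC3, sum_mul, sum_div]
      refine sum_le_sum fun j hj => ?_
      have hj0 := (hν j hj).1
      have hT := hpos j hj
      rw [abs_mul]
      have e : |(-1/(2 * (ν j * n)))| = 1/(2 * (ν j * n)) := by
        rw [abs_div, abs_neg, abs_one, abs_of_pos (by positivity)]
      rw [e]
      calc 1/(2 * (ν j * n)) * |E (fl j)| ≤ 1/(2 * (ν j * n)) * k := by gcongr; exact hlin j hj
        _ = 1/ν j * (k/2) / n := by field_simp
        _ ≤ _ := by
          gcongr
          calc (k:ℝ)/2 ≤ k + 1 := by linarith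
            _ ≤ (k+1)^(m+2) := le_self_pow₀ (by linarith) (by omega)
    have h2 := h1.trans hR
    rw [abs_le] at h2 hL ⊢
    have h8 : 0 ≤ 2 * 8^(m+1) * ((k:ℝ)+1)^(m+2) / n := by positivity
    have e : (C * C2 + C3 + 2 * 8^(m+1)) * ((k:ℝ)+1)^(m+2) / n = C * C2 * ((k:ℝ)+1)^(m+2) / n
      + C3 * ((k:ℝ)+1)^(m+2) / n + 2 * 8^(m+1) * ((k:ℝ)+1)^(m+2) / n := by ring
    rw [e]
    constructor <;> linarith
  · push Not at hk
    have hk' : (n:ℝ) ≤ 4 * (k+1) := by exact_mod_cast (by omega : n ≤ 4 * (k+1))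
    have hE0 : 0 ≤ E (fun N => ∏ j ∈ J, bet 0 (N j)) := by
      rw [← map_zero E]
      exact hmono _ _ fun N => prod_nonneg fun j _ => bet_nonneg _
    have hE1 : E (fun N => ∏ j ∈ J, bet 0 (N j)) ≤ 1 := by
      rw [← hone]
      exact hmono _ _ fun N => prod_le_one (fun j _ => bet_nonneg _) (fun j _ => bet_le_one _)
    have hs0 : 0 ≤ ∏ j ∈ J, Real.sqrt (Real.pi/2 * (ν j * n)) := prod_nonneg fun j _ => Real.sqrt_nonneg _
    have hs1 : ∏ j ∈ J, Real.sqrt (Real.pi/2 * (ν j * n)) ≤ (2 * n)^m := by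
      rw [hm, ← prod_const]
      refine prod_le_prod (fun j _ => Real.sqrt_nonneg _) fun j hj => ?_
      rw [Real.sqrt_le_left (by positivity)]
      have h2 : ν j * n ≤ n := mul_le_of_le_one_left (by positivity) (hν j hj).2
      have : Real.pi / 2 ≤ 2 := by linarith [Real.pi_le_four]
      have : Real.pi/2 * (ν j * n) ≤ 2 * n := mul_le_mul this h2 (hpos j hj).le (by norm_num)
      nlinarith
    have hone' : (1:ℝ) ≤ (2*n)^m := one_le_pow₀ (by linarith)
    have hp : E (fun N => ∏ j ∈ J, bet 0 (N j)) * ∏ j ∈ J, Real.sqrt (Real.pi/2 * (ν j * n)) ≤ (2*n)^m :=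
      (mul_le_of_le_one_left hs0 hE1).trans hs1
    have hp0 := mul_nonneg hE0 hs0
    have hb : |E (fun N => ∏ j ∈ J, bet 0 (N j)) * ∏ j ∈ J, Real.sqrt (Real.pi/2 * (ν j * n)) - 1| ≤ (2*n)^m := by
      rw [abs_le]; constructor <;> linarith
    refine hb.trans ?_
    rw [le_div_iff₀ (by linarith)]
    calc (2*(n:ℝ))^m * n ≤ (2*n)^m * (2*n) := mul_le_mul_of_nonneg_left (by linarith) (by positivity)
      _ = (2*n)^(m+1) := by ring
      _ ≤ (8 * ((k:ℝ)+1))^(m+1) := pow_le_pow_left₀ (by positivity) (by linarith) _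
      _ = 8^(m+1) * ((k:ℝ)+1)^(m+1) := by rw [mul_pow]
      _ ≤ (C * C2 + C3 + 2 * 8^(m+1)) * ((k:ℝ)+1)^(m+2) := by
        gcongr
        · have : (0:ℝ) ≤ 8^(m+1) := by positivity
          have : 0 ≤ C * C2 := by positivity
          linarith
        · linarith
        · omega

lemma E_op {d : ℕ} (J : Finset (Fin d)) (S1 S2 : Finset (Fin d → ℤ)) (v1 v2 : (Fin d → ℤ) → ℝ)
    (hv1 : ∀ i ∈ S1, 0 ≤ v1 i) (hv2 : ∀ i ∈ S2, 0 ≤ v2 i)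
    (h1 : ∑ i ∈ S1, v1 i = 1) (h2 : ∑ i ∈ S2, v2 i = 1)
    (hs1 : ∀ j, ∀ i ∈ S1, (i j).natAbs = 0 ∨ (i j).natAbs = 1)
    (hs2 : ∀ j, ∀ i ∈ S2, (i j).natAbs = 0 ∨ (i j).natAbs = 1)
    (π1 π2 ν : Fin d → ℝ) (hπ1 : ∀ j, π1 j = ∑ i ∈ S1, v1 i * ((i j).natAbs : ℝ))
    (hπ2 : ∀ j, π2 j = ∑ i ∈ S2, v2 i * ((i j).natAbs : ℝ))
    (hν : ∀ j, ν j = (π1 j + π2 j)/2) (hνpos : ∀ j ∈ J, 0 < ν j) :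
    ∃ C : ℝ, 0 ≤ C ∧ ∀ n k p q : ℕ, 1 ≤ n → p = q + k → p + q = n →
    |((StepOp d S1 v1)^p * (StepOp d S2 v2)^q) (Fx d J 0) 0 * ∏ j ∈ J, Real.sqrt (Real.pi/2 * (ν j * n)) - 1| ≤
      C * ((k:ℝ)+1)^(J.card + 2) / n := by
  have key : ∀ (S' : Finset (Fin d → ℤ)) (v : (Fin d → ℤ) → ℝ), (∀ i ∈ S', 0 ≤ v i) → ∑ i ∈ S', v i = 1 →
      (∀ j, ∀ i ∈ S', (i j).natAbs = 0 ∨ (i j).natAbs = 1) → ∀ j, 0 ≤ ∑ i ∈ S', v i * ((i j).natAbs : ℝ) ∧ 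
      ∑ i ∈ S', v i * ((i j).natAbs : ℝ) ≤ 1 := by
    intro S' v hv h hs j
    refine ⟨sum_nonneg fun i hi => mul_nonneg (hv i hi) (by positivity), ?_⟩
    rw [← h]
    refine sum_le_sum fun i hi => mul_le_of_le_one_right (hv i hi) ?_
    rcases hs j i hi with h | h <;> rw [h] <;> simp
  have b1 : ∀ j, 0 ≤ π1 j ∧ π1 j ≤ 1 := fun j => by rw [hπ1]; exact key S1 v1 hv1 h1 hs1 j
  have b2 : ∀ j, 0 ≤ π2 j ∧ π2 j ≤ 1 := fun j => by rw [hπ2]; exact key S2 v2 hv2 h2 hs2 j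
  obtain ⟨C, hC, h⟩ := E_abs J ν (fun j hj => ⟨hνpos j hj, by rw [hν]; linarith [(b1 j).2, (b2 j).2]⟩)
  refine ⟨C, hC, fun n k p q hn hpq hn2 => ?_⟩
  have hn' : (1:ℝ) ≤ n := by exact_mod_cast hn
  set E : ((Fin d → ℕ) → ℝ) →ₗ[ℝ] ℝ := (LinearMap.proj (R := ℝ) (φ := fun _ : Fin d → ℕ => ℝ) 0) ∘ₗ 
    ((StepOp d S1 v1)^p * (StepOp d S2 v2)^q) with hE
  have hEa : ∀ f, E f = ((StepOp d S1 v1)^p) (((StepOp d S2 v2)^q) f) 0 := fun f => rfl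
  have hp : (p:ℝ) = q + k := by exact_mod_cast hpq
  have hnr : (n:ℝ) = p + q := by exact_mod_cast hn2.symm
  have hq0 : (0:ℝ) ≤ q := by positivity
  have hk0 : (0:ℝ) ≤ k := by positivity
  refine h n k hn (by omega) E ?_ ?_ ?_ ?_ ?_
  · intro f g hfg
    rw [hEa, hEa]
    exact op_pow_mono hv1 p (op_pow_mono hv2 q hfg) 0
  · rw [hEa, op_one_pow h2, op_one_pow h1]
  · intro j _
    rw [hEa]
    simp only [sub_eq_add_neg]
    rw [op_lin_pow h2 j _ (hπ2 j), op_lin_pow h1 j _ (hπ1 j)]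
    have : (((0 : Fin d → ℕ) j : ℕ):ℝ) + (-(ν j * n) + q * π2 j + p * π1 j) = k * ((π1 j - π2 j)/2) := by
      rw [hν, hnr, hp]; simp; ring
    beta_reduce
    rw [this, abs_mul, abs_of_nonneg hk0]
    apply mul_le_of_le_one_right hk0
    have := b1 j; have := b2 j
    rw [abs_le]; constructor <;> linarith
  · intro j _
    rw [hEa]
    have e : (fun N : Fin d → ℕ => ((N j:ℝ) - ν j * n)^2) = fun N => ((N j:ℝ) + (-(ν j * n)))^2 + 0 := by
      ext N; ring
    rw [e, op_sq_pow h2 j (hs2 j) _ (hπ2 j), op_sq_pow h1 j (hs1 j) _ (hπ1 j)]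
    have : (((0 : Fin d → ℕ) j : ℕ):ℝ) + (-(ν j * n) + q * π2 j + p * π1 j) = k * ((π1 j - π2 j)/2) := by
      rw [hν, hnr, hp]; simp; ring
    beta_reduce
    rw [this]
    have ⟨x0, x1⟩ := b1 j; have ⟨y0, y1⟩ := b2 j
    have t1 : π1 j * (1 - π1 j) ≤ 1 := by nlinarith
    have t2 : π2 j * (1 - π2 j) ≤ 1 := by nlinarith
    have t3 : ((π1 j - π2 j)/2)^2 ≤ 1 := by nlinarith
    have t4 : (k * ((π1 j - π2 j)/2))^2 ≤ (k:ℝ)^2 := by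
      rw [mul_pow]; exact mul_le_of_le_one_right (by positivity) t3
    have t5 : p * (π1 j * (1 - π1 j)) ≤ p := mul_le_of_le_one_right (by positivity) t1
    have t6 : q * (π2 j * (1 - π2 j)) ≤ q := mul_le_of_le_one_right (by positivity) t2
    linarith
  · intro j hj hkn
    rw [hEa]
    have e : (fun N : Fin d → ℕ => Real.exp (-1/4) ^ (N j)) = fun N => 1 * Real.exp (-1/4) ^ (N j) := by
      ext N; ring
    rw [e, op_exp_pow h2 j (hs2 j) _ (hπ2 j), op_exp_pow h1 j (hs1 j) _ (hπ1 j)]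
    have hr : Real.exp (-1/4) ≤ 4/5 := by
      have : (5/4:ℝ) ≤ Real.exp (1/4) := by linarith [Real.add_one_le_exp (1/4:ℝ)]
      rw [show (-1/4:ℝ) = -(1/4) by ring, Real.exp_neg]
      rw [inv_le_comm₀ (Real.exp_pos _) (by norm_num)]
      norm_num at this ⊢; exact this
    have hr0 := Real.exp_pos (-1/4:ℝ)
    set r := Real.exp (-1/4:ℝ)
    have ⟨x0, x1⟩ := b1 j; have ⟨y0, y1⟩ := b2 j
    have g : ∀ (t : ℝ) (m : ℕ), 0 ≤ t → t ≤ 1 → (1 - t * (1-r))^m ≤ Real.exp (-(m * (t * (1-r)))) := by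
      intro t m ht ht1
      rw [show -(m * (t * (1-r))) = m * (-(t * (1-r))) by ring, Real.exp_nat_mul]
      refine pow_le_pow_left₀ (by nlinarith) ?_ _
      linarith [Real.add_one_le_exp (-(t * (1-r)))]
    have g0 : 0 ≤ 1 - π1 j * (1-r) := by nlinarith
    have hk4 : 4 * (k:ℝ) ≤ n := by exact_mod_cast hkn
    simp only [Pi.zero_apply, pow_zero, mul_one, one_mul]
    calc _ ≤ Real.exp (-(q * (π2 j * (1-r)))) * Real.exp (-(p * (π1 j * (1-r)))) := 
          mul_le_mul (g _ _ y0 y1) (g _ _ x0 x1) (pow_nonneg g0 _) (Real.exp_pos _).le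
      _ = Real.exp (-((q * π2 j + p * π1 j) * (1-r))) := by rw [← Real.exp_add]; congr 1; ring
      _ ≤ _ := by
        apply Real.exp_le_exp.2
        have hm : 3/4 * (ν j * n) ≤ q * π2 j + p * π1 j := by
          rw [hν]
          have a1 : q * π1 j ≤ p * π1 j := mul_le_mul_of_nonneg_right (by linarith) x0
          have a2 : (3/4 * n) * (π1 j + π2 j) ≤ (2 * q) * (π1 j + π2 j) := 
            mul_le_mul_of_nonneg_right (by linarith) (by linarith)
          linarith
        have hm0 : 0 < ν j * n := mul_pos (hνpos j hj) (by linarith)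
        have : 3/4 * (ν j * n) * (1/5) ≤ (q * π2 j + p * π1 j) * (1 - r) := 
          mul_le_mul hm (by linarith) (by norm_num) (by linarith)
        linarith

lemma summable_poly (z : ℝ) (h0 : 0 < z) (h1 : z < 1) (R : ℕ) : Summable (fun k : ℕ => ((k:ℝ)+1)^R * z^k) := by
  have h := summable_pow_mul_geometric_of_norm_lt_one R (r := z) (by rw [Real.norm_eq_abs, abs_of_pos h0]; exact h1)
  have h' := ((summable_nat_add_iff 1).2 h).mul_right z⁻¹
  refine h'.congr fun k => ?_
  push_cast
  field_simp
  ring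

lemma hasSum_half (z : ℝ) (h1 : |z| < 1) : HasSum (fun k : ℕ => ((k:ℝ)+1) * z^k) (1/(1-z)^2) := by
  have a := hasSum_coe_mul_geometric_of_norm_lt_one (r := z) h1
  have b := hasSum_geometric_of_norm_lt_one (ξ := z) h1
  have e1 : (fun k : ℕ => ((k:ℝ)+1) * z^k) = fun k : ℕ => (k:ℝ) * z^k + z^k := by
    funext k; ring
  have e2 : 1/(1-z)^2 = z/(1-z)^2 + (1-z)⁻¹ := by
    have : 1 - z ≠ 0 := by have := (abs_lt.1 h1).2; linarith
    field_simp; ring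
  rw [e1, e2]
  exact a.add b

lemma hasSum_parity (z : ℝ) (h0 : 0 < z) (h1 : z < 1) (n : ℕ) : HasSum (fun k : ℕ => if Even (n+k) then ((k:ℝ)+1) * z^k else 0)
    (1/2 * (1/(1-z)^2 + (-1)^n / (1+z)^2)) := by
  have a := hasSum_half z (by rw [abs_of_pos h0]; exact h1)
  have b := (hasSum_half (-z) (by rw [abs_neg, abs_of_pos h0]; exact h1)).mul_left ((-1)^n)
  have e1 : (fun k : ℕ => if Even (n+k) then ((k:ℝ)+1) * z^k else 0) =
      fun k : ℕ => 1/2 * (((k:ℝ)+1) * z^k + (-1)^n * (((k:ℝ)+1) * (-z)^k)) := by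
    funext k
    split_ifs with h
    · have : (-1:ℝ)^n * (-z)^k = z^k := by
        rw [neg_pow z, ← mul_assoc, ← pow_add, h.neg_one_pow, one_mul]
      linear_combination (-1/2) * ((k:ℝ)+1) * this
    · have : (-1:ℝ)^n * (-z)^k = - z^k := by
        rw [neg_pow z, ← mul_assoc, ← pow_add, (Nat.not_even_iff_odd.1 h).neg_one_pow]; ring
      linear_combination (-1/2) * ((k:ℝ)+1) * this
  have e2 : 1/2 * (1/(1-z)^2 + (-1)^n / (1+z)^2) = 1/2 * (1/(1-z)^2 + (-1)^n * (1/(1-(-z))^2)) := by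
    rw [sub_neg_eq_add]; ring
  rw [e1, e2]
  exact (a.add b).mul_left (1/2)

lemma series_bd (z : ℝ) (h0 : 0 < z) (h1 : z < 1) (C : ℝ) (hC : 0 ≤ C) (R : ℕ) (hR : 2 ≤ R) :
    ∃ C' : ℝ, 0 ≤ C' ∧ ∀ n : ℕ, 1 ≤ n → ∀ u : ℕ → ℝ,
    (∀ k ≤ n, Even (n+k) → |u k - (k+1)| ≤ C * ((k:ℝ)+1)^R / n) →
    |∑ k ∈ range (n+1), (if Even (n+k) then z^k * u k else 0) - 1/2 * (1/(1-z)^2 + (-1)^n / (1+z)^2)| ≤ C' / n := by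
  have hs := summable_poly z h0 h1 R
  refine ⟨(C+1) * ∑' k : ℕ, ((k:ℝ)+1)^R * z^k, mul_nonneg (by linarith) (tsum_nonneg fun k => by positivity),
    fun n hn u hu => ?_⟩
  have hn' : (1:ℝ) ≤ n := by exact_mod_cast hn
  have H1 : HasSum (fun k => if k ∈ range (n+1) then (if Even (n+k) then z^k * u k else 0) else 0)
     (∑ k ∈ range (n+1), (if Even (n+k) then z^k * u k else 0)) := by
    have e : ∑ k ∈ range (n+1), (if Even (n+k) then z^k * u k else 0) = ∑ k ∈ range (n+1),
        (fun k => if k ∈ range (n+1) then (if Even (n+k) then z^k * u k else 0) else 0) k :=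
      sum_congr rfl fun k hk => by simp only [if_pos hk]
    rw [e]
    exact hasSum_sum_of_ne_finset_zero (fun k hk => by simp only [if_neg hk])
  have H2 := H1.sub (hasSum_parity z h0 h1 n)
  rw [← H2.tsum_eq, ← Real.norm_eq_abs, mul_div_right_comm]
  refine tsum_of_norm_bounded (hs.hasSum.mul_left ((C+1)/n)) fun k => ?_
  rw [Real.norm_eq_abs]
  have hk0 : (0:ℝ) ≤ k := by positivity
  have hpos : 0 ≤ (C+1)/n * (((k:ℝ)+1)^R * z^k) := by positivity
  by_cases he : Even (n+k)
  · by_cases hk : k ∈ range (n+1)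
    · simp only [if_pos he, if_pos hk]
      rw [show z^k * u k - (k+1) * z^k = (u k - (k+1)) * z^k by ring, abs_mul, abs_of_pos (pow_pos h0 k)]
      have := hu k (by have := mem_range.1 hk; omega) he
      calc _ ≤ C * ((k:ℝ)+1)^R / n * z^k := by gcongr
        _ ≤ (C+1) * ((k:ℝ)+1)^R / n * z^k := by gcongr; linarith
        _ = _ := by ring
    · simp only [if_pos he, if_neg hk]
      rw [zero_sub, abs_neg, abs_of_nonneg (by positivity)]
      have hkn : (n:ℝ) ≤ k + 1 := by
        have := mem_range.not.1 hk
        exact_mod_cast (by omega : n ≤ k + 1)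
      rw [div_mul_eq_mul_div, le_div_iff₀ (by linarith)]
      calc (k+1) * z^k * n ≤ (k+1) * z^k * (k+1) := by gcongr
        _ = 1 * (((k:ℝ)+1)^2 * z^k) := by ring
        _ ≤ _ := by
          gcongr
          · linarith
          · linarith
  · simp only [if_neg he]
    simp [hpos]

lemma reindex (n : ℕ) (h : ℕ → ℝ) : ∑ p ∈ range (n+1), (if n ≤ 2*p then h p else 0) =
    ∑ k ∈ range (n+1), (if Even (n+k) then h ((n+k)/2) else 0) := by
  rw [← sum_filter, ← sum_filter]
  refine sum_nbij' (fun p => 2*p - n) (fun k => (n+k)/2) ?_ ?_ ?_ ?_ ?_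
  · intro p hp
    simp only [mem_filter, mem_range] at *
    refine ⟨by omega, by rw [Nat.even_iff]; omega⟩
  · intro k hk
    simp only [mem_filter, mem_range, Nat.even_iff] at *
    omega
  · intro k hk
    simp only [mem_filter, mem_range, Nat.even_iff] at *
    omega
  · intro k hk
    simp only [mem_filter, mem_range, Nat.even_iff] at *
    omega
  · intro k hk
    simp only [mem_filter, mem_range, Nat.even_iff] at *
    congr 1; omega

lemma StepOp_smul (d : ℕ) (S' : Finset (Fin d → ℤ)) (w : (Fin d → ℤ) → ℝ) (c : ℝ) (hc : c ≠ 0) :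
    StepOp d S' w = c • StepOp d S' (fun i => w i / c) := by
  refine LinearMap.ext fun f => funext fun N => ?_
  rw [LinearMap.smul_apply, Pi.smul_apply, StepOp_apply, StepOp_apply, smul_eq_mul, mul_sum]
  refine sum_congr rfl fun i _ => ?_
  field_simp

lemma term_bd (n k p m : ℕ) (hn : 1 ≤ n) (hk : 2*p = n+k) (hpn : p ≤ n) (X P C : ℝ) (hC : 0 ≤ C)
    (hX : |X * P - 1| ≤ C * ((k:ℝ)+1)^(m+2)/n) :
    |((n.choose p:ℝ) - n.choose (p+1))/2^n * X * (n/2 * Real.sqrt (Real.pi/2 * n) * P) - (k+1)| ≤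
      (3*C+7) * ((k:ℝ)+1)^(m+3)/n := by
  obtain ⟨h1, h2⟩ := choose_asymp n k hn p hk hpn
  have hn' : (1:ℝ) ≤ n := by exact_mod_cast hn
  have hk0 : (0:ℝ) ≤ k := by positivity
  have hkr : 2*(p:ℝ) = n + k := by exact_mod_cast hk
  set y2 := (n.choose p:ℝ)/2^n * Real.sqrt (Real.pi/2 * n) with hy2
  set y1 : ℝ := n/(n+k+2) with hy1
  have hd : (0:ℝ) < n+k+2 := by positivity
  have y1n : 0 ≤ y1 := by positivity
  have y1l : y1 ≤ 1 := by rw [hy1, div_le_one hd]; linarith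
  have y1d : |y1 - 1| ≤ (k+2)/n := by
    have : y1 - 1 = - ((k+2)/(n+k+2)) := by rw [hy1]; field_simp; ring
    rw [this, abs_neg, abs_of_nonneg (by positivity)]
    exact div_le_div_of_nonneg_left (by positivity) (by positivity) (by linarith)
  have hch : (n.choose p:ℝ) - n.choose (p+1) = (k+1) * (2/(n+k+2)) * n.choose p := by
    have h := Nat.choose_succ_right_eq n p
    have h' : (n.choose (p+1):ℝ) * (p+1) = n.choose p * (n - p) := by
      rw [← Nat.cast_sub hpn]; exact_mod_cast h
    have e : (n:ℝ)+k+2 = 2*(p+1) := by linarith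
    have hk' : (k:ℝ) = 2*p - n := by linarith
    have hp : (p:ℝ)+1 ≠ 0 := by positivity
    rw [e, hk']
    field_simp
    linarith
  have e : ((n.choose p:ℝ) - n.choose (p+1))/2^n * X * (n/2 * Real.sqrt (Real.pi/2 * n) * P) - (k+1) =
      (k+1) * (y1*y2*(X*P-1) + y1*(y2-1) + (y1-1)) := by
    rw [hch, hy1, hy2]; field_simp; ring
  rw [e, abs_mul, abs_of_nonneg (by positivity : (0:ℝ) ≤ k+1)]
  have a1 : |y1*y2*(X*P-1)| ≤ 3 * (C * ((k:ℝ)+1)^(m+2)/n) := by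
    rw [abs_mul]
    refine mul_le_mul ?_ hX (abs_nonneg _) (by norm_num)
    rw [abs_mul, abs_of_nonneg y1n]
    calc y1 * |y2| ≤ 1 * 3 := mul_le_mul y1l h2 (abs_nonneg _) (by norm_num)
      _ = 3 := by norm_num
  have q1 : (1:ℝ) ≤ k+1 := by linarith
  have q2 : ((k:ℝ)+1)^2 ≤ (k+1)^(m+2) := pow_le_pow_right₀ q1 (by omega)
  have q3 : ((k:ℝ)+1) ≤ (k+1)^(m+2) := by simpa using pow_le_pow_right₀ q1 (show 1 ≤ m+2 by omega)
  have a2 : |y1*(y2-1)| ≤ 5 * ((k:ℝ)+1)^(m+2)/n := by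
    rw [abs_mul, abs_of_nonneg y1n]
    calc y1 * |y2-1| ≤ 1 * (5*((k:ℝ)+1)^2/n) := mul_le_mul y1l h1 (abs_nonneg _) (by norm_num)
      _ ≤ _ := by rw [one_mul]; gcongr
  have a3 : |y1-1| ≤ 2 * ((k:ℝ)+1)^(m+2)/n := by
    refine y1d.trans ?_
    gcongr
    linarith
  have t := (abs_add_le (y1*y2*(X*P-1) + y1*(y2-1)) (y1-1)).trans 
    (add_le_add_left (abs_add_le (y1*y2*(X*P-1)) (y1*(y2-1))) _)
  calc (k+1) * |y1*y2*(X*P-1) + y1*(y2-1) + (y1-1)| ≤ 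
      (k+1) * (3 * (C * ((k:ℝ)+1)^(m+2)/n) + 5 * ((k:ℝ)+1)^(m+2)/n + 2 * ((k:ℝ)+1)^(m+2)/n) := by
        gcongr; linarith
    _ = _ := by ring

lemma main_scaled {d : ℕ} (l : Fin d) (J : Finset (Fin d)) (hJ : ∀ j, j ∈ J ↔ j ≠ l)
    (S : Finset (Fin d → ℤ)) (w : (Fin d → ℤ) → ℝ) (hw : ∀ i ∈ S, 0 ≤ w i)
    (hsmall : ∀ i ∈ S, ∀ m, i m = -1 ∨ i m = 0 ∨ i m = 1)
    (hs : ∀ a ∈ J, ∀ i ∈ S, Function.update i a (-(i a)) ∈ S ∧ w (Function.update i a (-(i a))) = w i)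
    (hQ : ∀ i ∈ S, i l = 0 → w i = 0)
    (A1 B1 ρ : ℝ) (hA1 : A1 = ∑ i ∈ S.filter (fun i => i l = -1), w i)
    (hB1 : B1 = ∑ i ∈ S.filter (fun i => i l = 1), w i) (hA : 0 < A1) (hB : 0 < B1)
    (hρ : 1 < ρ) (hρ2 : A1 = ρ^2 * B1)
    (ν : Fin d → ℝ) (hν : ∀ j, ν j = ((∑ i ∈ S.filter (fun i => i l = 1), w i * ((i j).natAbs:ℝ)) / B1 +
      (∑ i ∈ S.filter (fun i => i l = -1), w i * ((i j).natAbs:ℝ)) / A1)/2) (hνpos : ∀ j ∈ J, 0 < ν j) :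
    ∃ C : ℝ, 0 ≤ C ∧ ∀ n : ℕ, 1 ≤ n → 
    |weightedWalkCount d S w n / (2*ρ*B1)^n * (n/2 * Real.sqrt (Real.pi/2 * n) * 
      ∏ j ∈ J, Real.sqrt (Real.pi/2 * (ν j * n))) - 1/2 * (1/(1-1/ρ)^2 + (-1)^n/(1+1/ρ)^2)| ≤ C / n := by
  have hab : ∀ s : Fin d → ℤ, s ∈ S → ∀ j, (s j).natAbs = 0 ∨ (s j).natAbs = 1 := by
    intro i hi j
    rcases hsmall i hi j with h | h | h <;> rw [h] <;> simp
  obtain ⟨C, hC, hE⟩ := E_op J (S.filter (fun i => i l = 1)) (S.filter (fun i => i l = -1)) 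
    (fun i => w i / B1) (fun i => w i / A1) 
    (fun i hi => div_nonneg (hw i (mem_filter.1 hi).1) hB.le)
    (fun i hi => div_nonneg (hw i (mem_filter.1 hi).1) hA.le)
    (by rw [← sum_div, ← hB1, div_self hB.ne']) (by rw [← sum_div, ← hA1, div_self hA.ne'])
    (fun j i hi => hab i (mem_filter.1 hi).1 j) (fun j i hi => hab i (mem_filter.1 hi).1 j)
    (fun j => (∑ i ∈ S.filter (fun i => i l = 1), w i * ((i j).natAbs:ℝ)) / B1)
    (fun j => (∑ i ∈ S.filter (fun i => i l = -1), w i * ((i j).natAbs:ℝ)) / A1)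
    ν (fun j => by rw [sum_div]; exact sum_congr rfl fun i _ => by ring)
    (fun j => by rw [sum_div]; exact sum_congr rfl fun i _ => by ring) hν hνpos
  have hρ0 : 0 < ρ := by linarith
  have hz0 : 0 < 1/ρ := by positivity
  have hz1 : 1/ρ < 1 := by rw [div_lt_one hρ0]; exact hρ
  obtain ⟨C', hC', hser⟩ := series_bd (1/ρ) hz0 hz1 (3*C+7) (by linarith) (J.card+3) (by omega)
  refine ⟨C', hC', fun n hn => ?_⟩
  set sc : ℝ := n/2 * Real.sqrt (Real.pi/2 * n) * ∏ j ∈ J, Real.sqrt (Real.pi/2 * (ν j * n)) with hsc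
  set E : ℕ → ℕ → ℝ := fun p q => ((StepOp d (S.filter (fun i => i l = 1)) (fun i => w i / B1))^p * 
    (StepOp d (S.filter (fun i => i l = -1)) (fun i => w i / A1))^q) (Fx d J 0) 0 with hEd
  set u : ℕ → ℝ := fun k => ((n.choose ((n+k)/2):ℝ) - n.choose ((n+k)/2+1))/2^n * 
    E ((n+k)/2) (n-(n+k)/2) * sc with hu
  have hmain : weightedWalkCount d S w n / (2*ρ*B1)^n * sc = 
      ∑ k ∈ range (n+1), (if Even (n+k) then (1/ρ)^k * u k else 0) := by
    rw [hcount_formula l J hJ S w hsmall hs hQ n, reindex n, sum_div, sum_mul]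
    refine sum_congr rfl fun k hk => ?_
    have hkn := mem_range.1 hk
    split_ifs with he
    · rw [Nat.even_iff] at he
      obtain ⟨p, hp⟩ : ∃ p, p = (n+k)/2 := ⟨_, rfl⟩
      obtain ⟨q, hq⟩ : ∃ q, q = n - p := ⟨_, rfl⟩
      simp only [hu, ← hp, ← hq]
      rw [StepOp_smul d _ w B1 hB.ne', StepOp_smul d (S.filter (fun i => i l = -1)) w A1 hA.ne',
        smul_pow, smul_pow, smul_mul_smul_comm, LinearMap.smul_apply, Pi.smul_apply, smul_eq_mul]
      have hEpq : ((StepOp d (S.filter (fun i => i l = 1)) (fun i => w i / B1))^p * 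
        (StepOp d (S.filter (fun i => i l = -1)) (fun i => w i / A1))^q) (Fx d J 0) 0 = E p q := rfl
      rw [hEpq]
      have hnn : n = p + q := by omega
      have hpk : p = q + k := by omega
      have hpow : B1^p * A1^q = (ρ*B1)^n * (1/ρ)^k := by
        rw [hρ2, hnn, hpk, one_div, inv_pow]
        field_simp
        ring
      have h2 : (2*ρ*B1)^n = 2^n * (ρ*B1)^n := by rw [← mul_pow]; ring
      rw [hpow, h2]
      have : (ρ*B1)^n ≠ 0 := by positivity
      field_simp
    · simp
  rw [hmain]
  refine hser n hn u fun k hk he => ?_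
  rw [Nat.even_iff] at he
  exact term_bd n k ((n+k)/2) J.card hn (by omega) (by omega) _ _ C hC 
    (hE n k ((n+k)/2) (n-(n+k)/2) hn (by omega) (by omega))

lemma b_eq {d : ℕ} (l j : Fin d) (hjl : j ≠ l)
    (S : Finset (Fin d → ℤ)) (w : (Fin d → ℤ) → ℝ) 
    (hsmall : ∀ i ∈ S, ∀ m, i m = -1 ∨ i m = 0 ∨ i m = 1)
    (hs : ∀ i ∈ S, Function.update i j (-(i j)) ∈ S ∧ w (Function.update i j (-(i j))) = w i)
    (hQ : ∀ i ∈ S, i l = 0 → w i = 0) (x : ℝ) :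
    ∑ i ∈ S.filter (fun i => i j = 1), w i * x ^ (i l) =
    (x * (∑ i ∈ S.filter (fun i => i l = 1), w i * ((i j).natAbs:ℝ)) + 
     x⁻¹ * (∑ i ∈ S.filter (fun i => i l = -1), w i * ((i j).natAbs:ℝ)))/2 := by
  have hflip : ∑ i ∈ S.filter (fun i => i j = 1), w i * x ^ (i l) = 
      ∑ i ∈ S.filter (fun i => i j = -1), w i * x ^ (i l) := by
    have inv : ∀ i : Fin d → ℤ, Function.update (Function.update i j (-(i j))) j 
        (-(Function.update i j (-(i j)) j)) = i := by intro i; simp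
    refine sum_nbij' (fun i => Function.update i j (-(i j))) (fun i => Function.update i j (-(i j))) 
      ?_ ?_ (fun i _ => inv i) (fun i _ => inv i) ?_
    · intro i hi
      have := mem_filter.1 hi
      exact mem_filter.2 ⟨(hs i this.1).1, by simp [this.2]⟩
    · intro i hi
      have := mem_filter.1 hi
      exact mem_filter.2 ⟨(hs i this.1).1, by simp [this.2]⟩
    · intro i hi
      have := mem_filter.1 hi
      rw [(hs i this.1).2, Function.update_of_ne hjl.symm]
  have : 2 * ∑ i ∈ S.filter (fun i => i j = 1), w i * x ^ (i l) = 
    x * (∑ i ∈ S.filter (fun i => i l = 1), w i * ((i j).natAbs:ℝ)) + 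
     x⁻¹ * (∑ i ∈ S.filter (fun i => i l = -1), w i * ((i j).natAbs:ℝ)) := by
    rw [two_mul]
    nth_rewrite 2 [hflip]
    rw [sum_filter, sum_filter, sum_filter, sum_filter, mul_sum, mul_sum, ← sum_add_distrib, ← sum_add_distrib]
    refine sum_congr rfl fun i hi => ?_
    rcases hsmall i hi l with h | h | h
    · rcases hsmall i hi j with h' | h' | h' <;> simp [h, h'] <;> ring
    · simp [hQ i hi h]
    · rcases hsmall i hi j with h' | h' | h' <;> simp [h, h'] <;> ring
  linarith

lemma sqrt_pow_rpow (X : ℝ) (hX : 0 ≤ X) (d : ℕ) : Real.sqrt (X^d) = X ^ ((d:ℝ)/2) := by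
  rw [Real.sqrt_eq_rpow, ← Real.rpow_natCast, ← Real.rpow_mul hX]
  congr 1; ring

lemma scale_eq {ι : Type*} (J : Finset ι) (ν : ι → ℝ) (hν : ∀ j ∈ J, 0 < ν j) (d n : ℕ) (hd : d = J.card + 1)
    (hn : 1 ≤ n) :
    (n/2 * Real.sqrt (Real.pi/2 * n) * ∏ j ∈ J, Real.sqrt (Real.pi/2 * (ν j * n))) *
     (2 * (Real.sqrt (2^d / ∏ j ∈ J, ν j) / Real.pi ^ ((d:ℝ)/2)) * (n:ℝ) ^ (-(d:ℝ)/2 - 1)) = 1 := by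
  have hn' : (0:ℝ) < n := by exact_mod_cast hn
  have hpi := Real.pi_pos
  have hP : 0 < ∏ j ∈ J, ν j := prod_pos hν
  have e1 : ∏ j ∈ J, Real.sqrt (Real.pi/2 * (ν j * n)) = Real.sqrt ((Real.pi/2 * n)^J.card * ∏ j ∈ J, ν j) := by
    rw [← Real.sqrt_prod]
    · congr 1
      rw [← prod_const, ← prod_mul_distrib]
      exact prod_congr rfl fun j _ => by ring
    · intro j hj
      have := hν j hj
      positivity
  have e2 : Real.sqrt (Real.pi/2 * n) * Real.sqrt ((Real.pi/2 * n)^J.card * ∏ j ∈ J, ν j) * 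
      Real.sqrt (2^d / ∏ j ∈ J, ν j) = Real.pi^((d:ℝ)/2) * (n:ℝ)^((d:ℝ)/2) := by
    rw [← Real.sqrt_mul (by positivity), ← Real.sqrt_mul (by positivity), ← Real.mul_rpow hpi.le hn'.le,
      ← sqrt_pow_rpow _ (by positivity)]
    congr 1
    have h3 : Real.pi/2 * n * ((Real.pi/2 * n)^J.card * ∏ j ∈ J, ν j) * (2^d / ∏ j ∈ J, ν j) =
        (Real.pi/2 * n)^(J.card+1) * 2^d := by
      rw [pow_succ]; field_simp
    rw [h3, hd, ← mul_pow]
    congr 1; ring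
  have e3 : (n:ℝ)^((d:ℝ)/2) * (n:ℝ) ^ (-(d:ℝ)/2 - 1) * n = 1 := by
    rw [← Real.rpow_add hn', ← Real.rpow_add_one hn'.ne']
    rw [show (d:ℝ)/2 + (-(d:ℝ)/2 - 1) + 1 = 0 by ring, Real.rpow_zero]
  rw [e1]
  have hp : Real.pi ^ ((d:ℝ)/2) ≠ 0 := by positivity
  calc _ = (Real.sqrt (Real.pi/2 * n) * Real.sqrt ((Real.pi/2 * n)^J.card * ∏ j ∈ J, ν j) * 
      Real.sqrt (2^d / ∏ j ∈ J, ν j)) / Real.pi ^ ((d:ℝ)/2) * (n:ℝ) ^ (-(d:ℝ)/2 - 1) * n := by ring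
    _ = (n:ℝ)^((d:ℝ)/2) * (n:ℝ) ^ (-(d:ℝ)/2 - 1) * n := by rw [e2, mul_div_cancel_left₀ _ hp]
    _ = 1 := e3

theorem negative_drift_asymptotics_Q_zero
    (d : ℕ) (hd : 2 ≤ d)
    (S : Finset (Fin d → ℤ)) (w : (Fin d → ℤ) → ℝ)
    -- steps lie in {-1,0,1}^d \ {0}
    (hSsmall : ∀ i ∈ S, (∀ m : Fin d, i m = -1 ∨ i m = 0 ∨ i m = 1) ∧ i ≠ 0)
    -- nonnegative weights
    (hw : ∀ i ∈ S, 0 ≤ w i)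
    -- symmetry of the weighting over each of the first d-1 axes
    (hsym : ∀ j : Fin d, (j : ℕ) < d - 1 → ∀ i ∈ S,
      Function.update i j (-(i j)) ∈ S ∧ w (Function.update i j (-(i j))) = w i)
    -- a positively weighted step forwards and backwards in each coordinate
    (hfb : ∀ j : Fin d, (∃ i ∈ S, i j = 1 ∧ 0 < w i) ∧ (∃ i ∈ S, i j = -1 ∧ 0 < w i))
    (A1 B1 : ℝ)
    (hA1 : A1 = ∑ i ∈ S.filter (fun i => i ⟨d - 1, by omega⟩ = -1), w i)
    (hB1 : B1 = ∑ i ∈ S.filter (fun i => i ⟨d - 1, by omega⟩ = 1), w i)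
    -- negative drift
    (hdrift : B1 < A1)
    -- every positively weighted step moves in the last coordinate (Q(1) = 0)
    (hQ0 : ∀ i ∈ S, 0 < w i → i ⟨d - 1, by omega⟩ ≠ 0)
    (ρ : ℝ) (hρ : ρ = Real.sqrt (A1 / B1))
    (Sx bx : ℝ → ℝ) (Cx : ℝ → ℝ)
    (hSx : ∀ x, Sx x = A1 / x + x * B1)
    (hbx : ∀ x, bx x = ∏ j ∈ Finset.univ.filter (fun j : Fin d => (j : ℕ) < d - 1),
        ∑ i ∈ S.filter (fun i => i j = 1), w i * x ^ (i ⟨d - 1, by omega⟩))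
    (hCx : ∀ x, Cx x = (Sx x * x / (2 * Real.pi ^ ((d : ℝ) / 2) * A1 * (1 - 1 / x) ^ 2))
        * Real.sqrt (Sx x ^ d / (x * bx x * B1))) :
    (0 < Sx ρ ^ d / (ρ * bx ρ * B1)) ∧ (0 < Sx (-ρ) ^ d / ((-ρ) * bx (-ρ) * B1)) ∧
    ∃ c : ℝ, 0 < c ∧ ∀ n : ℕ, 1 ≤ n →
      |weightedWalkCount d S w n
          - (n : ℝ) ^ (-(d : ℝ) / 2 - 1) * (Sx ρ ^ n * Cx ρ + Sx (-ρ) ^ n * Cx (-ρ))|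
        ≤ c * Sx ρ ^ n * (n : ℝ) ^ (-(d : ℝ) / 2 - 2) := by
  obtain ⟨l, hl⟩ : ∃ l : Fin d, l = ⟨d - 1, by omega⟩ := ⟨_, rfl⟩
  rw [← hl] at hA1 hB1 hQ0
  simp only [← hl] at hbx
  obtain ⟨J, hJd⟩ : ∃ J : Finset (Fin d), J = Finset.univ.filter (fun j : Fin d => (j : ℕ) < d - 1) := ⟨_, rfl⟩
  rw [← hJd] at hbx
  have hJm : ∀ j, j ∈ J ↔ (j:ℕ) < d - 1 := by intro j; rw [hJd]; simp
  have hJ : ∀ j, j ∈ J ↔ j ≠ l := by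
    intro j
    rw [hJm, hl, Ne, Fin.ext_iff]
    have := j.2
    simp only
    omega
  have hcard : d = J.card + 1 := by
    have : J = univ.erase l := by ext j; simp [hJ]
    rw [this, card_erase_of_mem (mem_univ _), card_univ, Fintype.card_fin]; omega
  have hQ : ∀ i ∈ S, i l = 0 → w i = 0 := by
    intro i hi h
    by_contra hne
    exact hQ0 i hi (lt_of_le_of_ne (hw i hi) (Ne.symm hne)) h
  have hsmall : ∀ i ∈ S, ∀ m, i m = -1 ∨ i m = 0 ∨ i m = 1 := fun i hi => (hSsmall i hi).1
  have hsJ : ∀ a ∈ J, ∀ i ∈ S, Function.update i a (-(i a)) ∈ S ∧ w (Function.update i a (-(i a))) = w i :=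
    fun a ha => hsym a ((hJm a).1 ha)
  have hA : 0 < A1 := by
    obtain ⟨i, hi, h1, h2⟩ := (hfb l).2
    rw [hA1]
    exact sum_pos' (fun i hi => hw i (mem_filter.1 hi).1) ⟨i, mem_filter.2 ⟨hi, h1⟩, h2⟩
  have hB : 0 < B1 := by
    obtain ⟨i, hi, h1, h2⟩ := (hfb l).1
    rw [hB1]
    exact sum_pos' (fun i hi => hw i (mem_filter.1 hi).1) ⟨i, mem_filter.2 ⟨hi, h1⟩, h2⟩
  have hρ1 : 1 < ρ := by
    rw [hρ, Real.lt_sqrt (by norm_num), one_pow, one_lt_div hB]; exact hdrift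
  have hρ0 : 0 < ρ := by linarith
  have hρ2 : A1 = ρ^2 * B1 := by
    rw [hρ, Real.sq_sqrt (by positivity)]; field_simp
  obtain ⟨ν, hν⟩ : ∃ ν : Fin d → ℝ, ∀ j, ν j = ((∑ i ∈ S.filter (fun i => i l = 1), w i * ((i j).natAbs:ℝ)) / B1 +
      (∑ i ∈ S.filter (fun i => i l = -1), w i * ((i j).natAbs:ℝ)) / A1)/2 := ⟨_, fun j => rfl⟩
  have hνpos : ∀ j ∈ J, 0 < ν j := by
    intro j _
    rw [hν]
    have p1 : ∀ i ∈ S.filter (fun i => i l = 1), 0 ≤ w i * ((i j).natAbs:ℝ) := 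
      fun i hi => mul_nonneg (hw i (mem_filter.1 hi).1) (by positivity)
    have p2 : ∀ i ∈ S.filter (fun i => i l = -1), 0 ≤ w i * ((i j).natAbs:ℝ) := 
      fun i hi => mul_nonneg (hw i (mem_filter.1 hi).1) (by positivity)
    have q1 := div_nonneg (sum_nonneg p1) hB.le
    have q2 := div_nonneg (sum_nonneg p2) hA.le
    obtain ⟨i, hi, h1, h2⟩ := (hfb j).1
    rcases hsmall i hi l with h | h | h
    · have := div_pos (sum_pos' p2 ⟨i, mem_filter.2 ⟨hi, h⟩, by rw [h1]; simpa using h2⟩) hA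
      linarith
    · exact absurd h (hQ0 i hi h2)
    · have := div_pos (sum_pos' p1 ⟨i, mem_filter.2 ⟨hi, h⟩, by rw [h1]; simpa using h2⟩) hB
      linarith
  have hP : 0 < ∏ j ∈ J, ν j := prod_pos hνpos
  have hpi := Real.pi_pos
  have hSx' : ∀ x : ℝ, x ≠ 0 → A1 = x^2 * B1 → Sx x = 2 * x * B1 := by
    intro x hx h
    rw [hSx, h]; field_simp; ring
  have hbx' : ∀ x : ℝ, x ≠ 0 → A1 = x^2 * B1 → bx x = (x*B1)^J.card * ∏ j ∈ J, ν j := by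
    intro x hx h
    rw [hbx, ← prod_const, ← prod_mul_distrib]
    refine prod_congr rfl fun j hj => ?_
    rw [b_eq l j ((hJ j).1 hj) S w hsmall (hsJ j hj) hQ x, hν, h]
    field_simp
  have hrad : ∀ x : ℝ, x ≠ 0 → A1 = x^2 * B1 → Sx x ^ d / (x * bx x * B1) = 2^d / ∏ j ∈ J, ν j := by
    intro x hx h
    have h3 : ∀ y : ℝ, y ^ d = y ^ (J.card + 1) := fun y => congrArg (fun m => y ^ m) hcard
    rw [hSx' x hx h, hbx' x hx h, h3, h3, show 2 * x * B1 = 2 * (x * B1) by ring, mul_pow, pow_succ (x * B1)]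
    have hxB : x * B1 ≠ 0 := mul_ne_zero hx hB.ne'
    field_simp
  obtain ⟨K, hK⟩ : ∃ K, K = Real.sqrt (2^d / ∏ j ∈ J, ν j) / Real.pi ^ ((d:ℝ)/2) := ⟨_, rfl⟩
  have hCx' : ∀ x : ℝ, x ≠ 0 → A1 = x^2 * B1 → Cx x = K / (1-1/x)^2 := by
    intro x hx h
    rw [hCx, hrad x hx h, hSx' x hx h, hK, h]
    have : (2 * x * B1 * x) / (2 * Real.pi ^ ((d : ℝ) / 2) * (x^2 * B1) * (1 - 1 / x) ^ 2) = 
       1 / (Real.pi ^ ((d : ℝ) / 2) * (1 - 1 / x) ^ 2) := by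
      rw [show 2 * Real.pi ^ ((d : ℝ) / 2) * (x^2 * B1) * (1 - 1 / x) ^ 2 = 
        (2 * x * B1 * x) * (Real.pi ^ ((d : ℝ) / 2) * (1 - 1 / x) ^ 2) by ring]
      rw [div_mul_eq_div_div, div_self (by positivity)]
    rw [this]
    rw [div_div, div_mul_eq_mul_div, one_mul]
  have hm2 : A1 = (-ρ)^2 * B1 := by rw [neg_sq]; exact hρ2
  have hmn : -ρ ≠ 0 := neg_ne_zero.2 hρ0.ne'
  refine ⟨?_, ?_, ?_⟩
  · rw [hrad ρ hρ0.ne' hρ2]; positivity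
  · rw [hrad (-ρ) hmn hm2]; positivity
  obtain ⟨C, hC, hmain⟩ := main_scaled l J hJ S w hw hsmall hsJ hQ A1 B1 ρ hA1 hB1 hA hB hρ1 hρ2 ν hν hνpos
  have hK0 : 0 < K := by rw [hK]; positivity
  refine ⟨2*K*C + 1, by positivity, fun n hn => ?_⟩
  have hn' : (0:ℝ) < n := by exact_mod_cast hn
  have hsc := scale_eq J ν hνpos d n hcard hn
  rw [← hK] at hsc
  have hm := hmain n hn
  set sc : ℝ := n/2 * Real.sqrt (Real.pi/2 * n) * ∏ j ∈ J, Real.sqrt (Real.pi/2 * (ν j * n)) with hscd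
  rw [hCx' ρ hρ0.ne' hρ2, hCx' (-ρ) hmn hm2, hSx' ρ hρ0.ne' hρ2, hSx' (-ρ) hmn hm2]
  set N : ℝ := (n:ℝ) ^ (-(d:ℝ)/2 - 1) with hN
  have hN0 : 0 < N := by positivity
  have hN2 : (n:ℝ) ^ (-(d:ℝ)/2 - 2) = N / n := by
    rw [hN, ← Real.rpow_sub_one hn'.ne']; congr 1; ring
  set T : ℝ := (2*ρ*B1)^n with hT
  have hT0 : 0 < T := by positivity
  have hT2 : (2 * -ρ * B1)^n = (-1)^n * T := by rw [hT, ← mul_pow]; ring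
  rw [hN2, hT2, show 1 - 1/(-ρ) = 1 + 1/ρ by rw [div_neg]; ring]
  set W := weightedWalkCount d S w n
  have e : W - N * (T * (K/(1-1/ρ)^2) + (-1)^n * T * (K/(1+1/ρ)^2)) = 
    (T * (2*K*N)) * (W / T * sc - 1/2 * (1/(1-1/ρ)^2 + (-1)^n/(1+1/ρ)^2)) := by
    have : T * (2*K*N) * (W / T * sc) = W := by
      rw [show T * (2*K*N) * (W / T * sc) = (W / T * T) * (sc * (2*K*N)) by ring, hsc, mul_one,
        div_mul_cancel₀ _ hT0.ne']
    rw [mul_sub, this]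
    ring
  rw [e, abs_mul, abs_of_pos (by positivity)]
  calc _ ≤ (T * (2*K*N)) * (C / n) := by gcongr
    _ = (2*K*C) * T * (N/n) := by ring
    _ ≤ _ := by gcongr; linarith
end

section
/- Let 𝒮 ⊆ {−1,0,1}^d \ {0} be a (unweighted) step set that is symmetric over every axis (for every 1 ≤ j ≤ d, negating the j-th coordinate of any step of 𝒮 yields a step of 𝒮) and that moves forwards and backwards in each coordinate (for every j there exist steps in 𝒮 with j-th coordinate 1 and with j-th coordinate −1). For 1 ≤ k ≤ d let s^{(k)} = #{ i ∈ 𝒮 : i_k = 1 }. Then there is a constant c > 0 such that for all n ≥ 1, | s_n · |𝒮|^{−n} · n^{d/2} − (s^{(1)} ⋯ s^{(d)})^{−1/2} · π^{−d/2} · |𝒮|^{d/2} | ≤ c/n, where s_n is the number of walks of length n with steps in 𝒮, beginning at the origin and confined to ℕ^d. -/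
open Finset

/-- The number of walks of length `n` with steps in `S`, beginning at the origin
and confined to the non-negative orthant `ℕ^d`. -/
noncomputable def walkCount (d : ℕ) (S : Finset (Fin d → ℤ)) (n : ℕ) : ℕ :=
  Nat.card {u : Fin n → (Fin d → ℤ) //
    (∀ k : Fin n, u k ∈ S) ∧
    ∀ k : Fin n, ∀ m : Fin d, 0 ≤ ∑ j ∈ Finset.Iic k, u j m}

namespace HS

/-- indicator of a nonzero coordinate -/
def chi {d : ℕ} (s : Fin d → ℤ) : Fin d → ℕ := fun k => if s k = 0 then 0 else 1

/-- the law of the numbers of nonzero coordinates, as a linear functional -/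
noncomputable def Ex {d : ℕ} (S : Finset (Fin d → ℤ)) : ℕ → (((Fin d → ℕ) → ℝ) →ₗ[ℝ] ℝ)
  | 0 => LinearMap.proj 0
  | n + 1 => (S.card : ℝ)⁻¹ • ∑ s ∈ S, (Ex S n) ∘ₗ LinearMap.funLeft ℝ ℝ (fun N => N + chi s)

lemma Ex_zero {d : ℕ} (S : Finset (Fin d → ℤ)) (F) : Ex S 0 F = F 0 := rfl

lemma Ex_succ {d : ℕ} (S : Finset (Fin d → ℤ)) (n : ℕ) (F) :
    Ex S (n + 1) F = (S.card : ℝ)⁻¹ * ∑ s ∈ S, Ex S n (fun N => F (N + chi s)) := by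
  simp only [Ex, LinearMap.smul_apply, LinearMap.sum_apply, LinearMap.comp_apply, smul_eq_mul]
  rfl

lemma Ex_mono {d : ℕ} (S : Finset (Fin d → ℤ)) (n : ℕ) :
    ∀ F G : (Fin d → ℕ) → ℝ, (∀ N, F N ≤ G N) → Ex S n F ≤ Ex S n G := by
  induction n with
  | zero => intro F G h; exact h 0
  | succ n ih =>
    intro F G h
    rw [Ex_succ, Ex_succ]
    gcongr with s hs
    exact ih _ _ (fun N => h _)

lemma Ex_const {d : ℕ} (S : Finset (Fin d → ℤ)) (hS : (S.card : ℝ) ≠ 0) (n : ℕ) (c : ℝ) :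
    Ex S n (fun _ => c) = c := by
  induction n with
  | zero => rfl
  | succ n ih => rw [Ex_succ]; simp [ih]; field_simp

/-- interval weight -/
def ind (y e : ℤ) : ℝ := if -y ≤ e ∧ e ≤ y + 1 then 1 else 0

lemma ind_rec (y e : ℤ) (hy : 0 ≤ y) :
    ind y (e - 1) + ind y (e + 1) = ind (y + 1) e + ind (y - 1) e := by
  unfold ind
  split_ifs <;> first | (exfalso; omega) | norm_num

noncomputable def A (N : ℕ) (y : ℤ) : ℝ :=
  (∑ j ∈ range (N + 1), (N.choose j : ℝ) * ind y (2 * j - N)) / 2 ^ N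

lemma A_neg (N : ℕ) (y : ℤ) (hy : y < 0) : A N y = 0 := by
  unfold A
  rw [Finset.sum_eq_zero]; · simp
  intro j _
  unfold ind
  rw [if_neg (by omega)]; simp

lemma A_zero (y : ℤ) (hy : 0 ≤ y) : A 0 y = 1 := by
  simp [A, ind]; omega

lemma pascal (N : ℕ) (g : ℤ → ℝ) :
    ∑ j ∈ range (N + 2), ((N + 1).choose j : ℝ) * g (2 * j - (N + 1)) =
    ∑ j ∈ range (N + 1), (N.choose j : ℝ) * (g (2 * j - N - 1) + g (2 * j - N + 1)) := by
  have h1 : ∑ j ∈ range (N + 1), (N.choose j : ℝ) * g (2 * j - N - 1)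
     = g (- N - 1) + ∑ j ∈ range (N + 1), (N.choose (j+1) : ℝ) * g (2 * (j+1) - N - 1) := by
    rw [Finset.sum_range_succ', Finset.sum_range_succ (fun j : ℕ =>
      (N.choose (j+1) : ℝ) * g (2 * (j+1) - N - 1))]
    simp
    ring
  rw [Finset.sum_range_succ']
  simp only [mul_add (Nat.cast _ : ℝ), Finset.sum_add_distrib, h1, Nat.choose_succ_succ, Nat.cast_add, add_mul]
  simp only [Nat.choose_zero_right, Nat.cast_zero, Nat.cast_one, mul_zero, one_mul, zero_sub]
  have e1 : ∀ x : ℕ, (2 * ((x : ℤ) + 1) - (N + 1)) = 2 * x - N + 1 := fun x => by ring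
  have e2 : ∀ x : ℕ, (2 * ((x : ℤ) + 1) - N - 1) = 2 * x - N + 1 := fun x => by ring
  have e3 : (-((N : ℤ) + 1)) = -N - 1 := by ring
  simp only [e1, e2, e3, Nat.succ_eq_add_one]
  ring

lemma A_succ (N : ℕ) (y : ℤ) (hy : 0 ≤ y) :
    A (N + 1) y = (A N (y + 1) + A N (y - 1)) / 2 := by
  have h := pascal N (ind y)
  unfold A
  push_cast
  rw [h]
  simp only [ind_rec y _ hy, mul_add, Finset.sum_add_distrib]
  rw [pow_succ]
  field_simp

lemma A_at_zero (N : ℕ) : A N 0 = (N.choose ((N + 1) / 2) : ℝ) / 2 ^ N := by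
  unfold A
  rw [Finset.sum_eq_single ((N + 1) / 2)]
  · unfold ind
    rw [if_pos (by omega)]; simp
  · intro b _ hb
    unfold ind
    rw [if_neg (by omega)]; simp
  · intro h; exfalso; apply h; rw [Finset.mem_range]; omega

lemma A_step (N : ℕ) (x s : ℤ) (hx : 0 ≤ x) (hs : s = -1 ∨ s = 0 ∨ s = 1) :
    (A N (x + s) + A N (x + -s)) / 2 = A (N + (if s = 0 then 0 else 1)) x := by
  rcases hs with rfl | rfl | rfl
  · simp; rw [A_succ _ _ hx]; ring_nf
  · simp
  · simp; rw [A_succ _ _ hx]; ring_nf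

/-- symmetrisation of sums of products over a symmetric step set -/
lemma sum_symm {d : ℕ} (S : Finset (Fin d → ℤ))
    (hsym : ∀ j : Fin d, ∀ i ∈ S, Function.update i j (-(i j)) ∈ S)
    (g : Fin d → ℤ → ℝ) (K : Finset (Fin d)) :
    ∑ s ∈ S, ∏ k, g k (s k) =
      ∑ s ∈ S, ∏ k, (if k ∈ K then (g k (s k) + g k (-(s k))) / 2 else g k (s k)) := by
  induction K using Finset.induction_on with
  | empty => simp
  | insert a K ha ih =>
    rw [ih]
    set h : (Fin d → ℤ) → Fin d → ℝ :=
      fun s k => (if k ∈ K then (g k (s k) + g k (-(s k))) / 2 else g k (s k)) with hh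
    have hrefl : ∑ s ∈ S, ∏ k, h s k = ∑ s ∈ S, ∏ k, h (Function.update s a (-(s a))) k := by
      refine Finset.sum_bij' (fun s _ => Function.update s a (-(s a)))
        (fun s _ => Function.update s a (-(s a))) (hsym a) (hsym a) ?_ ?_ ?_
      · intro s _; simp
      · intro s _; simp
      · intro s _; simp
    have key : ∀ s, ∏ k, (if k ∈ insert a K then (g k (s k) + g k (-(s k))) / 2 else g k (s k))
        = (∏ k, h s k + ∏ k, h (Function.update s a (-(s a))) k) / 2 := by
      intro s
      rw [Fintype.prod_eq_mul_prod_compl a, Fintype.prod_eq_mul_prod_compl a,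
        Fintype.prod_eq_mul_prod_compl a (h (Function.update s a (-(s a))))]
      have h2 : ∏ k ∈ {a}ᶜ, h (Function.update s a (-(s a))) k = ∏ k ∈ {a}ᶜ, h s k := by
        refine Finset.prod_congr rfl fun k hk => ?_
        have : k ≠ a := by simpa using hk
        simp [hh, Function.update_of_ne this]
      have h3 : ∏ k ∈ {a}ᶜ, (if k ∈ insert a K then (g k (s k) + g k (-(s k))) / 2 else g k (s k))
          = ∏ k ∈ {a}ᶜ, h s k := by
        refine Finset.prod_congr rfl fun k hk => ?_
        have : k ≠ a := by simpa using hk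
        simp [hh, this]
      rw [h2, h3]
      simp [hh, ha]
      ring
    simp only [key]
    rw [← Finset.sum_div, Finset.sum_add_distrib, ← hrefl]
    simp only [hh]
    ring

noncomputable def cnt {d : ℕ} (S : Finset (Fin d → ℤ)) (n : ℕ) (x : Fin d → ℤ) : ℝ :=
  open Classical in
  ∑ u ∈ Fintype.piFinset (fun _ : Fin n => S),
    if (∀ k : Fin n, ∀ m : Fin d, 0 ≤ x m + ∑ j ∈ Finset.Iic k, u j m) then 1 else 0

lemma cnt_eq {d : ℕ} (S : Finset (Fin d → ℤ)) (n : ℕ) : (walkCount d S n : ℝ) = cnt S n 0 := by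
  classical
  unfold cnt walkCount
  rw [Finset.sum_boole, Nat.subtype_card]
  intro u
  simp [Fintype.mem_piFinset]

lemma cnt_zero {d : ℕ} (S : Finset (Fin d → ℤ)) (x : Fin d → ℤ) : cnt S 0 x = 1 := by
  simp [cnt]

lemma cnt_succ {d : ℕ} (S : Finset (Fin d → ℤ)) (n : ℕ) (x : Fin d → ℤ) :
    cnt S (n + 1) x = ∑ s ∈ S, if (∀ m, 0 ≤ x m + s m) then cnt S n (x + s) else 0 := by
  classical
  unfold cnt
  have h0 : ∀ (s : Fin d → ℤ) (u : Fin n → Fin d → ℤ),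
      (∀ k : Fin (n+1), ∀ m : Fin d, 0 ≤ x m + ∑ j ∈ Finset.Iic k, (Fin.cons s u : Fin (n+1) → Fin d → ℤ) j m)
      ↔ ((∀ m, 0 ≤ x m + s m) ∧ ∀ k : Fin n, ∀ m : Fin d, 0 ≤ (x + s) m + ∑ j ∈ Finset.Iic k, u j m) := by
    intro s u
    have hI : ∀ (q : ℕ) (k : Fin q), Finset.Iic k = Finset.univ.filter (· ≤ k) := by
      intro q k; ext; simp
    rw [Fin.forall_fin_succ]
    simp only [hI, Finset.sum_filter, Fin.sum_univ_succ]
    simp [add_assoc]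
  rw [show (∑ s ∈ S, if (∀ m, 0 ≤ x m + s m) then
      (∑ u ∈ Fintype.piFinset (fun _ : Fin n => S),
      if (∀ k : Fin n, ∀ m : Fin d, 0 ≤ (x + s) m + ∑ j ∈ Finset.Iic k, u j m) then (1:ℝ) else 0) else 0)
    = ∑ s ∈ S, ∑ u ∈ Fintype.piFinset (fun _ : Fin n => S),
      if (∀ k : Fin (n+1), ∀ m : Fin d, 0 ≤ x m + ∑ j ∈ Finset.Iic k,
        (Fin.cons s u : Fin (n+1) → Fin d → ℤ) j m) then (1:ℝ) else 0 from ?_]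
  · rw [← Finset.sum_product']
    refine Finset.sum_bij' (fun u _ => (u 0, Fin.tail u)) (fun p _ => Fin.cons p.1 p.2) ?_ ?_ ?_ ?_ ?_
    · intro u hu
      simp only [Fintype.mem_piFinset, Finset.mem_product] at hu ⊢
      exact ⟨hu 0, fun k => hu _⟩
    · intro p hp
      simp only [Fintype.mem_piFinset, Finset.mem_product] at hp ⊢
      intro k
      refine Fin.cases ?_ ?_ k
      · simpa using hp.1
      · intro i; simpa using hp.2 i
    · intro u _; simp
    · intro p _; simp
    · intro u _; simp
  · refine Finset.sum_congr rfl fun s _ => ?_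
    simp only [h0]
    by_cases hx : ∀ m, 0 ≤ x m + s m
    · simp [hx]
    · simp [hx]

lemma cnt_formula {d : ℕ} (S : Finset (Fin d → ℤ))
    (hS : (S.card : ℝ) ≠ 0)
    (hSsmall : ∀ i ∈ S, ∀ m : Fin d, i m = -1 ∨ i m = 0 ∨ i m = 1)
    (hsym : ∀ j : Fin d, ∀ i ∈ S, Function.update i j (-(i j)) ∈ S) (n : ℕ) :
    ∀ x : Fin d → ℤ, (∀ m, 0 ≤ x m) →
      cnt S n x = (S.card : ℝ) ^ n * Ex S n (fun N => ∏ k, A (N k) (x k)) := by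
  induction n with
  | zero =>
    intro x hx
    rw [cnt_zero, Ex_zero]
    simp [A_zero _ (hx _)]
  | succ n ih =>
    intro x hx
    rw [cnt_succ, Ex_succ]
    have h1 : ∀ s ∈ S, (if (∀ m, 0 ≤ x m + s m) then cnt S n (x + s) else 0)
        = (S.card : ℝ) ^ n * Ex S n (fun N => ∏ k, A (N k) (x k + s k)) := by
      intro s _
      split_ifs with h
      · exact ih (x + s) h
      · push Not at h
        obtain ⟨m, hm⟩ := h
        have : (fun N : Fin d → ℕ => ∏ k, A (N k) (x k + s k)) = 0 := by
          funext N
          exact Finset.prod_eq_zero (Finset.mem_univ m) (A_neg _ _ hm)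
        rw [this]; simp
    rw [Finset.sum_congr rfl h1, ← Finset.mul_sum, ← map_sum, ← map_sum, pow_succ]
    have h2 : (∑ s ∈ S, fun N : Fin d → ℕ => ∏ k, A (N k) (x k + s k))
        = ∑ s ∈ S, fun N : Fin d → ℕ => ∏ k, A ((N + chi s) k) (x k) := by
      funext N
      simp only [Finset.sum_apply]
      rw [sum_symm S hsym (fun k z => A (N k) (x k + z)) Finset.univ]
      refine Finset.sum_congr rfl fun s hs => Finset.prod_congr rfl fun k _ => ?_
      simp only [Finset.mem_univ, if_true]
      rw [A_step _ _ _ (hx k) (hSsmall s hs k)]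
      simp [chi]
    rw [h2]
    field_simp

lemma central_bounds (m : ℕ) :
    2 * (m : ℝ) + 1 ≤ ((2 * m + 1 : ℝ)) ^ 2 * (Real.pi / 2) * ((Nat.centralBinom m : ℝ) / 4 ^ m) ^ 2 ∧
    ((2 * m + 1 : ℝ)) ^ 2 * (Real.pi / 2) * ((Nat.centralBinom m : ℝ) / 4 ^ m) ^ 2 ≤ 2 * m + 2 := by
  have hW := Real.Wallis.W_eq_factorial_ratio m
  have h1 := Real.Wallis.W_le m
  have h2 := Real.Wallis.le_W m
  have hc : ((Nat.centralBinom m : ℝ) / 4 ^ m) ^ 2 * (2 * m + 1) * Real.Wallis.W m = 1 := by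
    have hcb : (Nat.centralBinom m : ℝ) = (Nat.factorial (2 * m)) / ((Nat.factorial m) * (Nat.factorial m)) := by
      rw [Nat.centralBinom_eq_two_mul_choose, Nat.cast_choose ℝ (by omega : m ≤ 2 * m)]
      congr 4; omega
    have hf : (Nat.factorial m : ℝ) ≠ 0 := by positivity
    have hf2 : (Nat.factorial (2 * m) : ℝ) ≠ 0 := by positivity
    have h4 : (4 : ℝ) ^ m = 2 ^ (2 * m) := by rw [pow_mul]; norm_num
    have h5 : (2 : ℝ) ^ (4 * m) = (2 ^ (2 * m)) ^ 2 := by rw [← pow_mul]; congr 1; ring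
    rw [hW, hcb, h4, h5]
    field_simp
  have hWp := Real.Wallis.W_pos m
  set q := ((Nat.centralBinom m : ℝ) / 4 ^ m) ^ 2 with hq
  set W := Real.Wallis.W m
  have hq0 : 0 ≤ q := by positivity
  have hm : (0 : ℝ) ≤ m := by positivity
  constructor
  · have : (2 * (m : ℝ) + 1) = (2 * m + 1) ^ 2 * W * q := by linear_combination (-(2 * (m : ℝ) + 1)) * hc
    calc (2 * (m : ℝ) + 1) = (2 * m + 1) ^ 2 * W * q := this
      _ ≤ _ := by gcongr
  · have h3 : (2 * (m : ℝ) + 1) * (Real.pi / 2) ≤ (2 * m + 2) * W := by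
      rw [div_mul_eq_mul_div, div_le_iff₀ (by positivity)] at h2; linarith
    calc (2 * (m : ℝ) + 1) ^ 2 * (Real.pi / 2) * q
        = ((2 * (m : ℝ) + 1) * (Real.pi / 2)) * ((2 * m + 1) * q) := by ring
      _ ≤ ((2 * m + 2) * W) * ((2 * m + 1) * q) := by gcongr
      _ = 2 * m + 2 := by linear_combination (2 * (m : ℝ) + 2) * hc

lemma A_even (m : ℕ) : A (2 * m) 0 = (Nat.centralBinom m : ℝ) / 4 ^ m := by
  rw [A_at_zero, Nat.centralBinom_eq_two_mul_choose, pow_mul]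
  norm_num
  congr 3; omega

lemma A_odd (m : ℕ) : A (2 * m + 1) 0 = (Nat.centralBinom (m + 1) : ℝ) / 4 ^ (m + 1) := by
  have h := Nat.choose_succ_succ (2 * m + 1) m
  have h' : (2 * m + 1).choose m = (2 * m + 1).choose (m + 1) :=
    Nat.choose_symm_of_eq_add (by ring)
  have h4 : (4 : ℝ) ^ (m + 1) = 2 * 2 ^ (2 * m + 1) := by
    rw [show (4 : ℝ) = 2 ^ 2 by norm_num, ← pow_mul, ← pow_succ']; congr 1
  rw [A_at_zero, Nat.centralBinom_eq_two_mul_choose, show 2 * (m + 1) = (2 * m + 1).succ by rfl,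
    show (2 * m + 1 + 1) / 2 = m + 1 by omega, h, h', h4]
  push_cast
  field_simp
  ring

lemma A_sq_bounds (N : ℕ) (hN : 1 ≤ N) :
    1 - 2 / (N : ℝ) ≤ (N * (Real.pi / 2)) * A N 0 ^ 2 ∧ (N * (Real.pi / 2)) * A N 0 ^ 2 ≤ 1 := by
  obtain ⟨m, rfl | rfl⟩ := Nat.even_or_odd' N
  · rw [A_even]
    obtain ⟨h1, h2⟩ := central_bounds m
    set q := ((Nat.centralBinom m : ℝ) / 4 ^ m) ^ 2
    have hm : (1 : ℝ) ≤ m := by exact_mod_cast (by omega : 1 ≤ m)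
    push_cast
    set X := Real.pi / 2 * q with hX
    have e1 : 2 * (m : ℝ) * (Real.pi / 2) * q = 2 * m * X := by rw [hX]; ring
    have e2 : (2 * (m : ℝ) + 1) ^ 2 * (Real.pi / 2) * q = (2 * m + 1) ^ 2 * X := by rw [hX]; ring
    rw [e1]; rw [e2] at h1 h2
    have hX1 : 1 / (2 * m + 1) ≤ X := by
      rw [div_le_iff₀ (by positivity)]
      nlinarith
    have hX2 : X ≤ (2 * m + 2) / (2 * m + 1) ^ 2 := by
      rw [le_div_iff₀ (by positivity)]; linarith
    constructor
    · calc 1 - 2 / (2 * (m : ℝ)) ≤ 2 * m * (1 / (2 * m + 1)) := by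
            rw [← sub_nonneg]
            have : 2 * (m : ℝ) * (1 / (2 * m + 1)) - (1 - 2 / (2 * (m : ℝ))) = (m + 1) / (m * (2 * m + 1)) := by
              field_simp; ring
            rw [this]; positivity
        _ ≤ _ := by gcongr
    · calc 2 * m * X ≤ 2 * m * ((2 * m + 2) / (2 * m + 1) ^ 2) := by gcongr
        _ ≤ 1 := by
          rw [mul_div_assoc', div_le_one (by positivity)]; nlinarith
  · rw [A_odd]
    obtain ⟨h1, h2⟩ := central_bounds (m + 1)
    set q := ((Nat.centralBinom (m + 1) : ℝ) / 4 ^ (m + 1)) ^ 2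
    have hm : (0 : ℝ) ≤ m := by positivity
    push_cast at h1 h2 ⊢
    set X := Real.pi / 2 * q with hX
    have e1 : (2 * (m : ℝ) + 1) * (Real.pi / 2) * q = (2 * m + 1) * X := by rw [hX]; ring
    have e2 : (2 * ((m : ℝ) + 1) + 1) ^ 2 * (Real.pi / 2) * q = (2 * m + 3) ^ 2 * X := by rw [hX]; ring
    rw [e1]; rw [e2] at h1 h2
    have hX1 : 1 / (2 * m + 3) ≤ X := by
      rw [div_le_iff₀ (by positivity)]
      nlinarith
    have hX2 : X ≤ (2 * m + 4) / (2 * m + 3) ^ 2 := by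
      rw [le_div_iff₀ (by positivity)]; linarith
    constructor
    · calc 1 - 2 / (2 * (m : ℝ) + 1) ≤ (2 * m + 1) * (1 / (2 * m + 3)) := by
            rw [← sub_nonneg]
            have : (2 * (m : ℝ) + 1) * (1 / (2 * m + 3)) - (1 - 2 / (2 * (m : ℝ) + 1)) = 4 / ((2 * m + 1) * (2 * m + 3)) := by
              field_simp; ring
            rw [this]; positivity
        _ ≤ _ := by gcongr
    · calc (2 * m + 1) * X ≤ (2 * m + 1) * ((2 * m + 4) / (2 * m + 3) ^ 2) := by gcongr
        _ ≤ 1 := by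
          rw [mul_div_assoc', div_le_one (by positivity)]; nlinarith

lemma A_nonneg (N : ℕ) : 0 ≤ A N 0 := by rw [A_at_zero]; positivity

lemma A_le_one (N : ℕ) : A N 0 ≤ 1 := by
  rw [A_at_zero, div_le_one (by positivity)]
  have := Nat.choose_le_two_pow N ((N + 1) / 2)
  exact_mod_cast this

lemma A_bounds (N : ℕ) (hN : 1 ≤ N) :
    1 - 2 / (N : ℝ) ≤ A N 0 * √(N * (Real.pi / 2)) ∧ A N 0 * √(N * (Real.pi / 2)) ≤ 1 := by
  obtain ⟨h1, h2⟩ := A_sq_bounds N hN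
  have h0 := A_nonneg N
  set r := A N 0 * √(N * (Real.pi / 2)) with hr
  have hr0 : 0 ≤ r := by positivity
  have hr2 : r ^ 2 = (N * (Real.pi / 2)) * A N 0 ^ 2 := by
    rw [hr, mul_pow, Real.sq_sqrt (by positivity)]; ring
  rw [← hr2] at h1 h2
  have : r ≤ 1 := by nlinarith
  exact ⟨by nlinarith, this⟩

/-- one-dimensional estimate on the good event -/
lemma z_good (n : ℕ) (hn : 1 ≤ n) (p : ℝ) (hp : 0 < p) (N : ℕ)
    (ht : 1 / 2 ≤ (N : ℝ) / (n * p)) :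
    0 ≤ A N 0 * √(n * p * (Real.pi / 2)) ∧ A N 0 * √(n * p * (Real.pi / 2)) ≤ 2 ∧
    |A N 0 * √(n * p * (Real.pi / 2)) - 1 + ((N : ℝ) / (n * p) - 1) / 2|
      ≤ ((N : ℝ) / (n * p) - 1) ^ 2 + 8 / (n * p) ∧
    (A N 0 * √(n * p * (Real.pi / 2)) - 1) ^ 2 ≤ 8 * ((N : ℝ) / (n * p) - 1) ^ 2 + 32 / (n * p) := by
  have hn' : (0 : ℝ) < n := by exact_mod_cast hn
  have hnp : 0 < n * p := by positivity
  set t := (N : ℝ) / (n * p) with htd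
  have htN : (N : ℝ) = t * (n * p) := by rw [htd]; field_simp
  have ht0 : 0 < t := by linarith
  have hNpos : (0 : ℝ) < N := by rw [htN]; positivity
  have hN1 : 1 ≤ N := by exact_mod_cast hNpos
  obtain ⟨hr1, hr2⟩ := A_bounds N hN1
  have hA := A_nonneg N
  set r := A N 0 * √(N * (Real.pi / 2)) with hr
  have hr0 : 0 ≤ r := by positivity
  have hst : 0 < √t := Real.sqrt_pos.2 ht0
  obtain ⟨w, hw⟩ : ∃ w, w = 1 / √t := ⟨_, rfl⟩
  have hw0 : 0 < w := by rw [hw]; positivity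
  have hz : A N 0 * √(n * p * (Real.pi / 2)) = r * w := by
    rw [hr, hw, htN, mul_assoc t, Real.sqrt_mul ht0.le]
    field_simp
  rw [hz]
  have htw : t * w ^ 2 = 1 := by
    rw [hw, div_pow, Real.sq_sqrt ht0.le]; field_simp
  have hw2 : w ^ 2 ≤ 2 := by nlinarith [sq_nonneg w]
  have hw3 : w ≤ 3 / 2 := by nlinarith
  have hteq : t = 1 / w ^ 2 := by field_simp; linarith
  have hrem : w - 1 + (t - 1) / 2 = (1 - w) ^ 2 * (1 + 2 * w) / (2 * w ^ 2) := by
    rw [hteq]; field_simp; ring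
  have htm : (t - 1) ^ 2 = (1 - w) ^ 2 * (1 + w) ^ 2 / w ^ 4 := by
    rw [hteq]; field_simp; ring
  have hrem0 : 0 ≤ w - 1 + (t - 1) / 2 := by rw [hrem]; positivity
  have hrem1 : w - 1 + (t - 1) / 2 ≤ (t - 1) ^ 2 := by
    rw [hrem, htm, div_le_div_iff₀ (by positivity) (by positivity)]
    have : (1 + 2 * w) * w ^ 2 ≤ (1 + w) ^ 2 * 2 := by nlinarith
    have h3 : 0 ≤ (1 - w) ^ 2 * w ^ 2 := by positivity
    nlinarith [mul_le_mul_of_nonneg_left this h3]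
  have hw1 : (w - 1) ^ 2 ≤ 4 * (t - 1) ^ 2 := by
    rw [htm, mul_div_assoc', le_div_iff₀ (by positivity)]
    have : w ^ 4 ≤ 4 * (1 + w) ^ 2 := by nlinarith [sq_nonneg w]
    have h3 : 0 ≤ (w - 1) ^ 2 := by positivity
    nlinarith [mul_le_mul_of_nonneg_left this h3]
  have habs : |r * w - w| = (1 - r) * w := by
    rw [show r * w - w = -((1 - r) * w) by ring, abs_neg, abs_of_nonneg]
    exact mul_nonneg (by linarith) hw0.le
  have hd : |r * w - w| ≤ 8 / (n * p) := by
    rw [habs]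
    have hN2 : 2 / (N : ℝ) ≤ 4 / (n * p) := by
      rw [div_le_div_iff₀ hNpos hnp, htN]
      linarith [mul_le_mul_of_nonneg_right ht hnp.le]
    calc (1 - r) * w ≤ (4 / (n * p)) * 2 :=
          mul_le_mul (by linarith) (by linarith) hw0.le (by positivity)
      _ = 8 / (n * p) := by ring
  have hd2 : |r * w - w| ≤ 2 := by
    rw [habs]
    calc (1 - r) * w ≤ 1 * 2 := mul_le_mul (by linarith) (by linarith) hw0.le (by norm_num)
      _ = 2 := by norm_num
  refine ⟨by positivity, ?_, ?_, ?_⟩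
  · calc r * w ≤ 1 * 2 := mul_le_mul hr2 (by linarith) hw0.le (by norm_num)
      _ = 2 := by norm_num
  · have : r * w - 1 + (t - 1) / 2 = (r * w - w) + (w - 1 + (t - 1) / 2) := by ring
    rw [this]
    calc _ ≤ |r * w - w| + |w - 1 + (t - 1) / 2| := abs_add_le _ _
      _ ≤ _ := by rw [abs_of_nonneg hrem0]; linarith
  · have h5 : (r * w - w) ^ 2 ≤ 16 / (n * p) := by
      rw [← sq_abs]
      have e8 : 16 / (n * p) = 2 * (8 / (n * p)) := by ring
      rw [e8]
      rw [sq]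
      exact mul_le_mul hd2 hd (abs_nonneg _) (by norm_num)
    have e : 32 / (n * p) = 2 * (16 / (n * p)) := by ring
    rw [e]
    have h6 : (r * w - 1) ^ 2 = 2 * (r * w - w) ^ 2 + 2 * (w - 1) ^ 2
        - ((r * w - w) - (w - 1)) ^ 2 := by ring
    have h7 := sq_nonneg ((r * w - w) - (w - 1))
    linarith

lemma prod_lin {ι : Type*} [DecidableEq ι] (K : Finset ι) :
    ∃ M : ℝ, 0 ≤ M ∧ ∀ z : ι → ℝ, (∀ k, 0 ≤ z k ∧ z k ≤ 2) →
      |∏ k ∈ K, z k - 1| ≤ M * ∑ k ∈ K, |z k - 1| ∧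
      |∏ k ∈ K, z k - 1 - ∑ k ∈ K, (z k - 1)| ≤ M * (∑ k ∈ K, |z k - 1|) ^ 2 := by
  induction K using Finset.induction_on with
  | empty => exact ⟨0, le_rfl, by simp⟩
  | insert a K ha ih =>
    obtain ⟨M, hM, h⟩ := ih
    refine ⟨2 * M + 1, by positivity, fun z hz => ?_⟩
    obtain ⟨h1, h2⟩ := h z hz
    simp only [Finset.prod_insert ha, Finset.sum_insert ha]
    have hs : 0 ≤ ∑ k ∈ K, |z k - 1| := by positivity
    set s := ∑ k ∈ K, |z k - 1|
    set P := ∏ k ∈ K, z k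
    set T := ∑ k ∈ K, (z k - 1)
    have hb := abs_nonneg (z a - 1)
    constructor
    · have : z a * P - 1 = z a * (P - 1) + (z a - 1) := by ring
      rw [this]
      calc _ ≤ |z a * (P - 1)| + |z a - 1| := abs_add_le _ _
        _ = z a * |P - 1| + |z a - 1| := by rw [abs_mul, abs_of_nonneg (hz a).1]
        _ ≤ 2 * (M * s) + |z a - 1| := by
          have := (hz a).2
          gcongr
        _ ≤ _ := by nlinarith [mul_nonneg hM hb]
    · have : z a * P - 1 - (z a - 1 + T) = (P - 1 - T) + (z a - 1) * (P - 1) := by ring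
      rw [this]
      calc _ ≤ |P - 1 - T| + |(z a - 1) * (P - 1)| := abs_add_le _ _
        _ = |P - 1 - T| + |z a - 1| * |P - 1| := by rw [abs_mul]
        _ ≤ M * s ^ 2 + |z a - 1| * (M * s) := by gcongr
        _ ≤ _ := by nlinarith [mul_nonneg hM hb, mul_nonneg hb hs, mul_nonneg hM (mul_nonneg hb hs), mul_nonneg hM (sq_nonneg s), mul_nonneg hM (sq_nonneg (|z a - 1|)), sq_nonneg s, sq_nonneg (|z a - 1|)]

/-- probability of a nonzero coordinate -/
noncomputable def pr {d : ℕ} (S : Finset (Fin d → ℤ)) (k : Fin d) : ℝ :=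
  (S.card : ℝ)⁻¹ * ∑ s ∈ S, (chi s k : ℝ)

lemma Ex_first {d : ℕ} (S : Finset (Fin d → ℤ)) (hS : (S.card : ℝ) ≠ 0) (k : Fin d) (n : ℕ) :
    Ex S n (fun N => (N k : ℝ) - n * pr S k) = 0 := by
  induction n with
  | zero => simp [Ex_zero]
  | succ n ih =>
    rw [Ex_succ]
    have h : ∀ s, Ex S n (fun N => (((N + chi s) k : ℕ) : ℝ) - ((n + 1 : ℕ) : ℝ) * pr S k)
        = chi s k - pr S k := by
      intro s
      have : (fun N : Fin d → ℕ => (((N + chi s) k : ℕ) : ℝ) - ((n + 1 : ℕ) : ℝ) * pr S k)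
         = (fun N : Fin d → ℕ => (N k : ℝ) - n * pr S k) + (fun _ => (chi s k : ℝ) - pr S k) := by
        funext N
        simp only [Pi.add_apply]
        push_cast; ring
      rw [this, map_add, ih, Ex_const S hS, zero_add]
    simp only [h, Finset.sum_sub_distrib, Finset.sum_const, nsmul_eq_mul]
    rw [mul_sub, ← pr]
    field_simp
    ring

lemma Ex_second {d : ℕ} (S : Finset (Fin d → ℤ)) (hS : (S.card : ℝ) ≠ 0) (k : Fin d)
    (hp0 : 0 ≤ pr S k) (hp1 : pr S k ≤ 1) (n : ℕ) :
    Ex S n (fun N => ((N k : ℝ) - n * pr S k) ^ 2) ≤ n := by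
  induction n with
  | zero => simp [Ex_zero]
  | succ n ih =>
    rw [Ex_succ]
    have h : ∀ s ∈ S, Ex S n (fun N => ((((N + chi s) k : ℕ) : ℝ) - ((n + 1 : ℕ) : ℝ) * pr S k) ^ 2)
        ≤ n + 1 := by
      intro s _
      have : (fun N : Fin d → ℕ => ((((N + chi s) k : ℕ) : ℝ) - ((n + 1 : ℕ) : ℝ) * pr S k) ^ 2)
         = (fun N : Fin d → ℕ => ((N k : ℝ) - n * pr S k) ^ 2)
           + (2 * ((chi s k : ℝ) - pr S k)) • (fun N : Fin d → ℕ => (N k : ℝ) - n * pr S k)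
           + (fun _ => ((chi s k : ℝ) - pr S k) ^ 2) := by
        funext N
        simp only [Pi.add_apply, Pi.smul_apply, smul_eq_mul]
        push_cast; ring
      rw [this, map_add, map_add, map_smul, Ex_first S hS, Ex_const S hS]
      have : ((chi s k : ℝ) - pr S k) ^ 2 ≤ 1 := by
        unfold chi; split_ifs <;> push_cast <;> nlinarith
      simp only [smul_zero, add_zero]
      linarith
    calc _ ≤ (S.card : ℝ)⁻¹ * ∑ s ∈ S, ((n : ℝ) + 1) := by
          gcongr with s hs
          exact h s hs
      _ = _ := by simp; field_simp

lemma Ex_exp {d : ℕ} (S : Finset (Fin d → ℤ)) (hS : (S.card : ℝ) ≠ 0) (k : Fin d) (n : ℕ) :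
    Ex S n (fun N => Real.exp (n * pr S k / 2 - N k)) ≤
      (Real.exp (pr S k * (Real.exp (-1) - 1 / 2))) ^ n := by
  induction n with
  | zero => simp [Ex_zero]
  | succ n ih =>
    rw [Ex_succ]
    set p := pr S k with hp
    have h : ∀ s, Ex S n (fun N => Real.exp (((n + 1 : ℕ) : ℝ) * p / 2 - ((N + chi s) k : ℕ)))
        = (Real.exp (p / 2) * (1 + chi s k * (Real.exp (-1) - 1))) *
          Ex S n (fun N => Real.exp (n * p / 2 - N k)) := by
      intro s
      rw [← smul_eq_mul (Real.exp (p / 2) * (1 + chi s k * (Real.exp (-1) - 1))), ← map_smul]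
      congr 1
      funext N
      simp only [Pi.smul_apply, smul_eq_mul, Pi.add_apply]
      have : (1 + (chi s k : ℝ) * (Real.exp (-1) - 1)) = Real.exp (-(chi s k : ℝ)) := by
        unfold chi; split_ifs <;> simp
      rw [this, ← Real.exp_add, ← Real.exp_add]
      congr 1
      push_cast; ring
    simp only [h]
    rw [← Finset.sum_mul, ← Finset.mul_sum, Finset.sum_add_distrib, ← Finset.sum_mul]
    have e : (S.card : ℝ)⁻¹ * (Real.exp (p / 2) * (∑ s ∈ S, (1 : ℝ) + (∑ s ∈ S, (chi s k : ℝ)) * (Real.exp (-1) - 1)) *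
        Ex S n (fun N => Real.exp (n * p / 2 - N k)))
        = (Real.exp (p / 2) * (p * (Real.exp (-1) - 1) + 1)) *
        Ex S n (fun N => Real.exp (n * p / 2 - N k)) := by
      rw [hp, pr]; simp; field_simp; ring
    rw [e, pow_succ']
    have hpos : 0 ≤ Ex S n (fun N => Real.exp (n * p / 2 - N k)) := by
      have := Ex_mono S n (fun _ => 0) (fun N => Real.exp (n * p / 2 - N k)) (fun N => by positivity)
      rwa [Ex_const S hS] at this
    have e2 : Real.exp (p * (Real.exp (-1) - 1 / 2)) = Real.exp (p / 2) * Real.exp (p * (Real.exp (-1) - 1)) := by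
      rw [← Real.exp_add]; congr 1; ring
    refine mul_le_mul ?_ ih hpos (Real.exp_pos _).le
    rw [e2]
    gcongr
    exact Real.add_one_le_exp _

lemma pr_eq {d : ℕ} (S : Finset (Fin d → ℤ))
    (hSsmall : ∀ i ∈ S, ∀ m : Fin d, i m = -1 ∨ i m = 0 ∨ i m = 1)
    (hsym : ∀ j : Fin d, ∀ i ∈ S, Function.update i j (-(i j)) ∈ S) (k : Fin d) :
    pr S k = 2 * ((S.filter (fun i => i k = 1)).card : ℝ) / S.card := by
  have h1 : (S.filter (fun i => i k = 1)).card = (S.filter (fun i => i k = -1)).card := by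
    refine Finset.card_bij' (fun s _ => Function.update s k (-(s k)))
        (fun s _ => Function.update s k (-(s k))) ?_ ?_ ?_ ?_
    · intro s hs
      simp only [Finset.mem_filter] at hs ⊢
      exact ⟨hsym k s hs.1, by simp [hs.2]⟩
    · intro s hs
      simp only [Finset.mem_filter] at hs ⊢
      exact ⟨hsym k s hs.1, by simp [hs.2]⟩
    · intro s _; simp
    · intro s _; simp
  have h2 : ∑ s ∈ S, (chi s k : ℝ) = (S.filter (fun i => i k = 1)).card + (S.filter (fun i => i k = -1)).card := by
    rw [Finset.card_filter, Finset.card_filter]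
    push_cast
    rw [← Finset.sum_add_distrib]
    refine Finset.sum_congr rfl fun s hs => ?_
    unfold chi
    rcases hSsmall s hs k with h | h | h <;> simp [h]
  rw [pr, h2, ← h1]
  ring

/-- pointwise estimate -/
lemma pointwise (d : ℕ) (p : Fin d → ℝ) (hp : ∀ k, 0 < p k) (hp1 : ∀ k, p k ≤ 1) :
    ∃ C : ℝ, 0 < C ∧ ∀ n : ℕ, 1 ≤ n → ∀ N : Fin d → ℕ,
      |∏ k, (A (N k) 0 * √(n * p k * (Real.pi / 2))) - 1 + (∑ k, ((N k : ℝ) / (n * p k) - 1)) / 2|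
      ≤ C * (∑ k, ((N k : ℝ) / (n * p k) - 1) ^ 2 + 1 / n
          + (n : ℝ) ^ d * ∑ k, Real.exp (n * p k / 2 - N k)) := by
  obtain ⟨M, hM, hprod⟩ := prod_lin (Finset.univ : Finset (Fin d))
  set P := ∑ k, 1 / p k with hP
  have hP0 : 0 ≤ P := Finset.sum_nonneg fun k _ => by have := hp k; positivity
  refine ⟨(8 * (M * d) + 1) + (32 * (M * d) + 8) * P + (2 ^ d + 1 + d), by positivity, ?_⟩
  set K := (8 * (M * d) + 1) + (32 * (M * d) + 8) * P + (2 ^ d + 1 + d) with hK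
  have a1 : 0 ≤ (32 * (M * d) + 8) * P := by positivity
  have a2 : (0 : ℝ) ≤ 2 ^ d + 1 + d := by positivity
  have a3 : 0 ≤ 8 * (M * d) + 1 := by positivity
  have hK0 : 0 ≤ K := by positivity
  have k1 : 8 * (M * d) + 1 ≤ K := by linarith
  have k2 : (32 * (M * d) + 8) * P ≤ K := by linarith
  have k3 : 2 ^ d + 1 + d ≤ K := by linarith
  have k4 : 1 ≤ K := by
    have : 0 ≤ M * d := by positivity
    linarith
  intro n hn N
  have hn1 : (1 : ℝ) ≤ n := by exact_mod_cast hn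
  have hn0 : (0 : ℝ) < n := by linarith
  set t : Fin d → ℝ := fun k => (N k : ℝ) / (n * p k) with ht
  set z : Fin d → ℝ := fun k => A (N k) 0 * √(n * p k * (Real.pi / 2)) with hz
  set V := ∑ k, (t k - 1) ^ 2 with hV
  have hV0 : 0 ≤ V := by positivity
  set E := ∑ k, Real.exp (n * p k / 2 - N k) with hE
  have hE0 : 0 ≤ E := by positivity
  have hMd : 0 ≤ M * d := by positivity
  have hnd : (1 : ℝ) ≤ (n : ℝ) ^ d := one_le_pow₀ hn1
  change |∏ k, z k - 1 + (∑ k, (t k - 1)) / 2| ≤ K * (V + 1 / n + (n : ℝ) ^ d * E)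
  by_cases hgood : ∀ k, 1 / 2 ≤ t k
  · have hg := fun k => z_good n hn (p k) (hp k) (N k) (hgood k)
    obtain ⟨_, h2⟩ := hprod z (fun k => ⟨(hg k).1, (hg k).2.1⟩)
    have e : ∏ k, z k - 1 + (∑ k, (t k - 1)) / 2
        = (∏ k, z k - 1 - ∑ k, (z k - 1)) + ∑ k, (z k - 1 + (t k - 1) / 2) := by
      rw [Finset.sum_add_distrib, Finset.sum_div]; ring
    have hPn : ∀ c : ℝ, ∑ k, c / (n * p k) = c * P * (1 / n) := by
      intro c
      rw [hP, Finset.mul_sum, Finset.sum_mul]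
      refine Finset.sum_congr rfl fun k _ => ?_
      have := hp k
      field_simp
    have hcs : (∑ k, |z k - 1|) ^ 2 ≤ d * ∑ k, (z k - 1) ^ 2 := by
      have := sq_sum_le_card_mul_sum_sq (s := (Finset.univ : Finset (Fin d))) (f := fun k => |z k - 1|)
      simpa using this
    have hb : ∑ k, (z k - 1) ^ 2 ≤ 8 * V + 32 * P * (1 / n) := by
      rw [← hPn, hV, Finset.mul_sum, ← Finset.sum_add_distrib]
      exact Finset.sum_le_sum fun k _ => (hg k).2.2.2
    have hl : |∑ k, (z k - 1 + (t k - 1) / 2)| ≤ V + 8 * P * (1 / n) := by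
      refine (Finset.abs_sum_le_sum_abs _ _).trans ?_
      rw [← hPn, hV, ← Finset.sum_add_distrib]
      exact Finset.sum_le_sum fun k _ => (hg k).2.2.1
    have hq : 0 ≤ 1 / (n : ℝ) := by positivity
    rw [e]
    calc _ ≤ |∏ k, z k - 1 - ∑ k, (z k - 1)| + |∑ k, (z k - 1 + (t k - 1) / 2)| := abs_add_le _ _
      _ ≤ M * (d * (8 * V + 32 * P * (1 / n))) + (V + 8 * P * (1 / n)) := by
        refine add_le_add (h2.trans ?_) hl
        exact mul_le_mul_of_nonneg_left (hcs.trans (mul_le_mul_of_nonneg_left hb (by positivity))) hM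
      _ = (8 * (M * d) + 1) * V + ((32 * (M * d) + 8) * P) * (1 / n) := by ring
      _ ≤ K * V +
          K * (1 / n) := by
        gcongr
      _ ≤ _ := by
        rw [← mul_add]
        have : 0 ≤ (n : ℝ) ^ d * E := by positivity
        exact mul_le_mul_of_nonneg_left (by linarith) hK0
  · push Not at hgood
    obtain ⟨j, hj⟩ := hgood
    have hE1 : 1 ≤ E := by
      have h1 : 1 ≤ Real.exp (n * p j / 2 - N j) := by
        apply Real.one_le_exp
        have := hp j
        simp only [ht] at hj
        rw [div_lt_iff₀ (by positivity)] at hj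
        linarith
      refine h1.trans ?_
      rw [hE]
      exact Finset.single_le_sum (f := fun k => Real.exp (n * p k / 2 - N k))
        (fun k _ => (Real.exp_pos _).le) (Finset.mem_univ j)
    have hz0 : ∀ k, 0 ≤ z k := fun k => mul_nonneg (A_nonneg _) (Real.sqrt_nonneg _)
    have hz1 : ∀ k, z k ≤ 2 * n := by
      intro k
      have h3 : √(n * p k * (Real.pi / 2)) ≤ 2 * n := by
        apply Real.sqrt_le_iff.2 ⟨by positivity, ?_⟩
        have hpi := Real.pi_le_four
        have hpi0 := Real.pi_pos
        calc n * p k * (Real.pi / 2) ≤ n * 1 * (4 / 2) := by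
              have := hp1 k
              gcongr
          _ ≤ (2 * n) ^ 2 := by nlinarith
      calc z k ≤ 1 * (2 * n) := mul_le_mul (A_le_one _) h3 (Real.sqrt_nonneg _) (by norm_num)
        _ = _ := one_mul _
    have hZ : |∏ k, z k| ≤ 2 ^ d * n ^ d := by
      rw [abs_of_nonneg (Finset.prod_nonneg fun k _ => hz0 k), ← mul_pow]
      calc _ ≤ ∏ k : Fin d, (2 * (n : ℝ)) := Finset.prod_le_prod (fun k _ => hz0 k) (fun k _ => hz1 k)
        _ = _ := by simp
    have hT : |(∑ k, (t k - 1)) / 2| ≤ d + V := by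
      have h5 : |∑ k, (t k - 1)| ≤ ∑ k, (1 + (t k - 1) ^ 2) := by
        refine (Finset.abs_sum_le_sum_abs _ _).trans (Finset.sum_le_sum fun k _ => ?_)
        rw [← sq_abs (t k - 1)]
        nlinarith [sq_nonneg (|t k - 1| - 1), sq_nonneg (|t k - 1|)]
      rw [Finset.sum_add_distrib] at h5
      simp only [Finset.sum_const, Finset.card_univ, Fintype.card_fin, nsmul_eq_mul, mul_one] at h5
      rw [abs_div, abs_two, div_le_iff₀ two_pos]
      have : (0 : ℝ) ≤ d := by positivity
      linarith
    have hY : 1 ≤ (n : ℝ) ^ d * E := one_le_mul_of_one_le_of_one_le hnd hE1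
    have hY2 : (n : ℝ) ^ d ≤ (n : ℝ) ^ d * E := le_mul_of_one_le_right (by positivity) hE1
    set Y := (n : ℝ) ^ d * E
    calc _ ≤ |∏ k, z k - 1| + |(∑ k, (t k - 1)) / 2| := abs_add_le _ _
      _ ≤ |∏ k, z k| + |(1 : ℝ)| + |(∑ k, (t k - 1)) / 2| := by gcongr; exact abs_sub _ _
      _ ≤ 2 ^ d * n ^ d + 1 + (d + V) := by rw [abs_one]; gcongr
      _ ≤ 2 ^ d * Y + 1 * Y + (d * Y + V) := by
        gcongr
        · linarith
        · exact le_mul_of_one_le_right (by positivity) hY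
      _ = 1 * V + (2 ^ d + 1 + d) * Y := by ring
      _ ≤ K * V +
          K * Y := by
        gcongr
      _ ≤ _ := by
        rw [← mul_add]
        have : 0 ≤ 1 / (n : ℝ) := by positivity
        exact mul_le_mul_of_nonneg_left (by linarith) hK0

lemma geo_bound (d : ℕ) (q : ℝ) (h0 : 0 ≤ q) (h1 : q < 1) :
    ∃ B : ℝ, 0 ≤ B ∧ ∀ n : ℕ, 1 ≤ n → (n : ℝ) ^ d * q ^ n ≤ B * (1 / n) := by
  have h := (tendsto_pow_const_mul_const_pow_of_lt_one (d + 1) h0 h1).bddAbove_range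
  obtain ⟨B, hB⟩ := h
  refine ⟨|B|, abs_nonneg _, fun n hn => ?_⟩
  have hn0 : (0 : ℝ) < n := by exact_mod_cast hn
  have h2 : (n : ℝ) ^ (d + 1) * q ^ n ≤ B := hB ⟨n, rfl⟩
  rw [mul_one_div, le_div_iff₀ hn0]
  calc _ = (n : ℝ) ^ (d + 1) * q ^ n := by ring
    _ ≤ |B| := h2.trans (le_abs_self _)

lemma expectation {d : ℕ} (S : Finset (Fin d → ℤ)) (hS : (S.card : ℝ) ≠ 0)
    (hp : ∀ k, 0 < pr S k) (hp1 : ∀ k, pr S k ≤ 1) :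
    ∃ C : ℝ, 0 < C ∧ ∀ n : ℕ, 1 ≤ n →
      |Ex S n (fun N => ∏ k, (A (N k) 0 * √(n * pr S k * (Real.pi / 2)))) - 1| ≤ C * (1 / n) := by
  obtain ⟨C, hC, hpt⟩ := pointwise d (pr S) hp hp1
  have he : Real.exp (-1) - 1 / 2 < 0 := by
    have h2 : (2 : ℝ) < Real.exp 1 := by linarith [Real.exp_one_gt_d9]
    rw [Real.exp_neg]
    have : (Real.exp 1)⁻¹ < 2⁻¹ := by gcongr
    linarith
  have hgeo := fun k => geo_bound d (Real.exp (pr S k * (Real.exp (-1) - 1 / 2))) (Real.exp_pos _).le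
    ((Real.exp_lt_exp.2 (mul_neg_of_pos_of_neg (hp k) he)).trans_eq Real.exp_zero)
  choose B hB0 hB using hgeo
  have hQ : 0 ≤ ∑ k, 1 / pr S k ^ 2 := by positivity
  have hBs : 0 ≤ ∑ k, B k := Finset.sum_nonneg fun k _ => hB0 k
  refine ⟨C * (∑ k, 1 / pr S k ^ 2 + 1 + ∑ k, B k), by positivity, fun n hn => ?_⟩
  have hn0 : (0 : ℝ) < n := by exact_mod_cast hn
  set Z : (Fin d → ℕ) → ℝ := fun N => ∏ k, (A (N k) 0 * √(n * pr S k * (Real.pi / 2))) with hZ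
  set T : Fin d → (Fin d → ℕ) → ℝ := fun k N => (N k : ℝ) / (n * pr S k) - 1 with hT
  set V : Fin d → (Fin d → ℕ) → ℝ := fun k N => ((N k : ℝ) / (n * pr S k) - 1) ^ 2 with hV
  set X : Fin d → (Fin d → ℕ) → ℝ := fun k N => Real.exp (n * pr S k / 2 - N k) with hX
  have hT0 : ∀ k, Ex S n (T k) = 0 := by
    intro k
    have : T k = (1 / (n * pr S k)) • (fun N : Fin d → ℕ => (N k : ℝ) - n * pr S k) := by
      funext N
      have := hp k
      simp only [hT, Pi.smul_apply, smul_eq_mul]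
      field_simp
    rw [this, map_smul, Ex_first S hS, smul_zero]
  have hV0 : ∀ k, Ex S n (V k) ≤ 1 / pr S k ^ 2 * (1 / n) := by
    intro k
    have hpk := hp k
    have : V k = (1 / (n * pr S k) ^ 2) • (fun N : Fin d → ℕ => ((N k : ℝ) - n * pr S k) ^ 2) := by
      funext N
      simp only [hV, Pi.smul_apply, smul_eq_mul]
      field_simp
    rw [this, map_smul, smul_eq_mul]
    calc _ ≤ (1 / (n * pr S k) ^ 2) * n := by
          gcongr
          exact Ex_second S hS k (hp k).le (hp1 k) n
      _ = _ := by field_simp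
  set F : (Fin d → ℕ) → ℝ := Z - (fun _ => (1 : ℝ)) + (1 / 2 : ℝ) • ∑ k, T k with hF
  set G : (Fin d → ℕ) → ℝ := C • (∑ k, V k + (fun _ => (1 / n : ℝ)) + ((n : ℝ) ^ d) • ∑ k, X k) with hG
  have hFE : Ex S n F = Ex S n Z - 1 := by
    rw [hF, map_add, map_sub, map_smul, map_sum, Ex_const S hS]
    simp [hT0]
  have hFG : ∀ N, |F N| ≤ G N := by
    intro N
    have := hpt n hn N
    have e1 : F N = Z N - 1 + (∑ k, T k N) / 2 := by
      simp [hF, Finset.sum_apply]; ring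
    have e2 : G N = C * (∑ k, V k N + 1 / n + (n : ℝ) ^ d * ∑ k, X k N) := by
      simp only [hG, Finset.sum_apply, Pi.add_apply, Pi.smul_apply, smul_eq_mul]
    rw [e1, e2]
    exact this
  have hGE : Ex S n G ≤ C * (∑ k, 1 / pr S k ^ 2 + 1 + ∑ k, B k) * (1 / n) := by
    rw [hG, map_smul, map_add, map_add, map_smul, map_sum, map_sum, Ex_const S hS, smul_eq_mul,
      smul_eq_mul, mul_assoc, add_mul, add_mul, one_mul, Finset.sum_mul, Finset.sum_mul, Finset.mul_sum]
    refine mul_le_mul_of_nonneg_left ?_ hC.le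
    refine add_le_add (add_le_add (Finset.sum_le_sum fun k _ => hV0 k) le_rfl)
      (Finset.sum_le_sum fun k _ => ?_)
    · refine le_trans ?_ (hB k n hn)
      gcongr
      exact Ex_exp S hS k n
  rw [← hFE, abs_le]
  constructor
  · have h1 := Ex_mono S n (-F) G (fun N => (neg_le_abs _).trans (hFG N))
    rw [map_neg] at h1
    linarith
  · exact (Ex_mono S n F G (fun N => (le_abs_self _).trans (hFG N))).trans hGE

lemma key_rpow (d : ℕ) (x P q s : ℝ) (hx : 0 < x) (hP : 0 < P) (hq : 0 < q) (hs : 0 < s) :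
    (x ^ d * P * q ^ d / s ^ d) ^ ((1 : ℝ) / 2) *
      (P ^ (-(1 : ℝ) / 2) * q ^ (-(d : ℝ) / 2) * s ^ ((d : ℝ) / 2)) = x ^ ((d : ℝ) / 2) := by
  have h : ∀ y : ℝ, 0 < y → (y ^ d) ^ ((1 : ℝ) / 2) = y ^ ((d : ℝ) / 2) := by
    intro y hy
    rw [← Real.rpow_natCast, ← Real.rpow_mul hy.le]
    congr 1; ring
  rw [Real.div_rpow (by positivity) (by positivity), Real.mul_rpow (by positivity) (by positivity),
    Real.mul_rpow (by positivity) (by positivity), h x hx, h q hq, h s hs, neg_div, neg_div,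
    Real.rpow_neg hP.le, Real.rpow_neg hq.le]
  have h1 := Real.rpow_pos_of_pos hP ((1 : ℝ) / 2)
  have h2 := Real.rpow_pos_of_pos hq ((d : ℝ) / 2)
  have h3 := Real.rpow_pos_of_pos hs ((d : ℝ) / 2)
  field_simp

end HS

theorem highly_symmetric_asymptotics
    (d : ℕ) (hd : 0 < d)
    (S : Finset (Fin d → ℤ))
    -- steps lie in {-1,0,1}^d \ {0}
    (hSsmall : ∀ i ∈ S, (∀ m : Fin d, i m = -1 ∨ i m = 0 ∨ i m = 1) ∧ i ≠ 0)
    -- the step set is symmetric over every axis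
    (hsym : ∀ j : Fin d, ∀ i ∈ S, Function.update i j (-(i j)) ∈ S)
    -- a step forwards and backwards in each coordinate
    (hfb : ∀ j : Fin d, (∃ i ∈ S, i j = 1) ∧ (∃ i ∈ S, i j = -1)) :
    ∃ c : ℝ, 0 < c ∧ ∀ n : ℕ, 1 ≤ n →
      |(walkCount d S n : ℝ) * (S.card : ℝ) ^ (-(n : ℤ)) * (n : ℝ) ^ ((d : ℝ) / 2)
        - (∏ k : Fin d, ((S.filter (fun i => i k = 1)).card : ℝ)) ^ (-(1 : ℝ) / 2)
            * Real.pi ^ (-(d : ℝ) / 2) * (S.card : ℝ) ^ ((d : ℝ) / 2)|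
      ≤ c / n := by
  have hsm := fun i hi => (hSsmall i hi).1
  obtain ⟨i0, hi0, _⟩ := (hfb ⟨0, hd⟩).1
  have hSpos : (0 : ℝ) < S.card := by exact_mod_cast Finset.card_pos.2 ⟨i0, hi0⟩
  have hS : (S.card : ℝ) ≠ 0 := hSpos.ne'
  set σ : Fin d → ℝ := fun k => ((S.filter (fun i => i k = 1)).card : ℝ) with hσ
  have hσ0 : ∀ k, 0 < σ k := by
    intro k
    obtain ⟨i, hi, hik⟩ := (hfb k).1
    have : 0 < (S.filter (fun i => i k = 1)).card := Finset.card_pos.2 ⟨i, by simp [hi, hik]⟩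
    simp only [hσ]
    exact_mod_cast this
  have hpr : ∀ k, HS.pr S k = 2 * σ k / S.card := HS.pr_eq S hsm hsym
  have hp : ∀ k, 0 < HS.pr S k := by
    intro k; rw [hpr]; have := hσ0 k; positivity
  have hp1 : ∀ k, HS.pr S k ≤ 1 := by
    intro k
    unfold HS.pr
    rw [inv_mul_le_iff₀ hSpos, mul_one]
    calc _ ≤ ∑ s ∈ S, (1 : ℝ) := by
          gcongr with s hs
          unfold HS.chi; split_ifs <;> simp
      _ = _ := by simp
  obtain ⟨C, hC, hE⟩ := HS.expectation S hS hp hp1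
  set L := (∏ k : Fin d, σ k) ^ (-(1 : ℝ) / 2) * Real.pi ^ (-(d : ℝ) / 2) * (S.card : ℝ) ^ ((d : ℝ) / 2)
    with hL
  have hprodpos : 0 < ∏ k : Fin d, σ k := Finset.prod_pos fun k _ => hσ0 k
  have hLpos : 0 < L := by
    rw [hL]
    exact mul_pos (mul_pos (Real.rpow_pos_of_pos hprodpos _) (Real.rpow_pos_of_pos Real.pi_pos _))
      (Real.rpow_pos_of_pos hSpos _)
  clear_value L σ
  refine ⟨L * C, mul_pos hLpos hC, fun n hn => ?_⟩
  have hn0 : (0 : ℝ) < n := by exact_mod_cast hn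
  have hkey : (∏ k : Fin d, √(n * HS.pr S k * (Real.pi / 2))) * L = (n : ℝ) ^ ((d : ℝ) / 2) := by
    have hpi := Real.pi_pos
    have h1 : ∏ k : Fin d, √(n * HS.pr S k * (Real.pi / 2))
        = (∏ k : Fin d, (n * σ k * Real.pi / S.card)) ^ ((1 : ℝ) / 2) := by
      rw [← Real.finsetProd_rpow _ _ (fun k _ => by have := hσ0 k; positivity)]
      refine Finset.prod_congr rfl fun k _ => ?_
      rw [Real.sqrt_eq_rpow, hpr]
      congr 1
      ring
    have h2 : ∏ k : Fin d, (n * σ k * Real.pi / S.card)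
        = (n : ℝ) ^ d * (∏ k, σ k) * Real.pi ^ d / (S.card : ℝ) ^ d := by
      simp [Finset.prod_mul_distrib, Finset.prod_div_distrib]
    rw [h1, h2, hL]
    exact HS.key_rpow d n _ _ _ hn0 hprodpos hpi hSpos
  have hwalk : (walkCount d S n : ℝ) * (S.card : ℝ) ^ (-(n : ℤ)) * (n : ℝ) ^ ((d : ℝ) / 2)
      = L * HS.Ex S n (fun N => ∏ k, (HS.A (N k) 0 * √(n * HS.pr S k * (Real.pi / 2)))) := by
    rw [HS.cnt_eq, HS.cnt_formula S hS hsm hsym n 0 (fun _ => le_rfl), zpow_neg, zpow_natCast]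
    have : (fun N : Fin d → ℕ => ∏ k, (HS.A (N k) 0 * √(n * HS.pr S k * (Real.pi / 2))))
        = (∏ k : Fin d, √(n * HS.pr S k * (Real.pi / 2))) •
          (fun N : Fin d → ℕ => ∏ k, HS.A (N k) ((0 : Fin d → ℤ) k)) := by
      funext N
      simp only [Finset.prod_mul_distrib, Pi.smul_apply, smul_eq_mul, Pi.zero_apply]
      ring
    rw [this, map_smul, smul_eq_mul, ← hkey]
    have hc : (S.card : ℝ) ^ n * ((S.card : ℝ) ^ n)⁻¹ = 1 := mul_inv_cancel₀ (pow_ne_zero _ hS)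
    generalize ∏ k : Fin d, √(n * HS.pr S k * (Real.pi / 2)) = R
    generalize HS.Ex S n _ = Q
    linear_combination (Q * R * L) * hc
  rw [hwalk]
  calc _ = |L * (HS.Ex S n (fun N => ∏ k, (HS.A (N k) 0 * √(n * HS.pr S k * (Real.pi / 2)))) - 1)| := by
        congr 1; ring
    _ = L * |HS.Ex S n (fun N => ∏ k, (HS.A (N k) 0 * √(n * HS.pr S k * (Real.pi / 2)))) - 1| := by
        rw [abs_mul, abs_of_pos hLpos]
    _ ≤ L * (C * (1 / n)) := by gcongr; exact hE n hn
    _ = _ := by ring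
end
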